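/- arXiv:math/0702781 — 3 statements merged into one kernel-verified Lean document; each statement's English description precedes it below -/
import Mathlib

section
/- Suppose X'X/n → Q with Q symmetric positive definite. Then β̃ is uniformly √n-consistent for β: lim_{M→∞} sup_{n≥k} sup_{β∈ℝ^k} P_{n,β,σ}(√n‖β̃ − β‖ ≥ M) = 0. Consequently, for every ε > 0 and any sequence of real numbers c_n ≥ 0 with c_n = o(n^{1/2}), lim_{n→∞} sup_{β∈ℝ^k} P_{n,β,σ}(c_n‖β̃ − β‖ ≥ ε) = 0. -/
open MeasureTheory Matrix Real Filter Topology ENNReal NNReal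

noncomputable section

/-- Euclidean norm of a finite tuple. -/
def enorm2 {ι : Type*} [Fintype ι] (v : ι → ℝ) : ℝ := Real.sqrt (∑ i, v i ^ 2)

/-- The `N(0, σ² I)` distribution on `ι → ℝ`, given by its Lebesgue density. -/
def gaussPi (ι : Type*) [Fintype ι] (σ2 : ℝ) : Measure (ι → ℝ) :=
  volume.withDensity fun x => ENNReal.ofReal
    ((2 * π * σ2) ^ (-(Fintype.card ι : ℝ) / 2) * Real.exp (-(enorm2 x) ^ 2 / (2 * σ2)))

/-- The Lebesgue density of the `N(0, σ² Q⁻¹)` distribution on `ι → ℝ`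
(for `Q` symmetric positive definite). -/
def gaussCovDens {ι : Type*} [Fintype ι] [DecidableEq ι] (σ2 : ℝ) (Q : Matrix ι ι ℝ)
    (x : ι → ℝ) : ℝ :=
  (2 * π * σ2) ^ (-(Fintype.card ι : ℝ) / 2) * Real.sqrt Q.det *
    Real.exp (-(x ⬝ᵥ Q.mulVec x) / (2 * σ2))

/-- The `N(0, σ² Q⁻¹)` distribution on `ι → ℝ` (for `Q` symmetric positive definite),
given by its Lebesgue density. -/
def gaussCov {ι : Type*} [Fintype ι] [DecidableEq ι] (σ2 : ℝ) (Q : Matrix ι ι ℝ) :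
    Measure (ι → ℝ) :=
  volume.withDensity fun x => ENNReal.ofReal (gaussCovDens σ2 Q x)

open Classical in
/-- Symmetric positive semidefinite square root (junk value `0` off the psd cone). -/
def msqrt {ι : Type*} [Fintype ι] [DecidableEq ι] (A : Matrix ι ι ℝ) : Matrix ι ι ℝ :=
  if h : A.PosSemidef then
    (h.1.eigenvectorUnitary : Matrix ι ι ℝ) * diagonal (Real.sqrt ∘ h.1.eigenvalues) *
      (star h.1.eigenvectorUnitary : Matrix ι ι ℝ) else 0

open Classical in
/-- Smallest eigenvalue of a symmetric matrix (junk value `0` otherwise). -/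
def lamMin {ι : Type*} [Fintype ι] [DecidableEq ι] (A : Matrix ι ι ℝ) : ℝ :=
  if h : A.IsHermitian then ⨅ i, h.eigenvalues i else 0

open Classical in
/-- Largest eigenvalue of a symmetric matrix (junk value `0` otherwise). -/
def lamMax {ι : Type*} [Fintype ι] [DecidableEq ι] (A : Matrix ι ι ℝ) : ℝ :=
  if h : A.IsHermitian then ⨆ i, h.eigenvalues i else 0

variable {n k₁ k₂ : ℕ}

/-- First block of columns of the design matrix. -/
def X1 (X : Matrix (Fin n) (Fin k₁ ⊕ Fin k₂) ℝ) : Matrix (Fin n) (Fin k₁) ℝ :=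
  X.submatrix id Sum.inl

/-- Second block of columns of the design matrix. -/
def X2 (X : Matrix (Fin n) (Fin k₁ ⊕ Fin k₂) ℝ) : Matrix (Fin n) (Fin k₂) ℝ :=
  X.submatrix id Sum.inr

/-- Unrestricted least squares estimator. -/
def betaU (X : Matrix (Fin n) (Fin k₁ ⊕ Fin k₂) ℝ) (Y : Fin n → ℝ) : (Fin k₁ ⊕ Fin k₂) → ℝ :=
  (Xᵀ * X)⁻¹.mulVec (Xᵀ.mulVec Y)

/-- Restricted least squares estimator. -/
def betaR (X : Matrix (Fin n) (Fin k₁ ⊕ Fin k₂) ℝ) (Y : Fin n → ℝ) : (Fin k₁ ⊕ Fin k₂) → ℝ :=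
  Sum.elim (((X1 X)ᵀ * X1 X)⁻¹.mulVec ((X1 X)ᵀ.mulVec Y)) (fun _ => 0)

/-- Risk estimate of the restricted model. -/
def rR (X : Matrix (Fin n) (Fin k₁ ⊕ Fin k₂) ℝ) (σ2 : ℝ) (Y : Fin n → ℝ) : ℝ :=
  Y ⬝ᵥ Y - betaR X Y ⬝ᵥ (Xᵀ * X).mulVec (betaR X Y) + σ2 * (2 * k₁ - n)

/-- Risk estimate of the unrestricted model. -/
def rU (X : Matrix (Fin n) (Fin k₁ ⊕ Fin k₂) ℝ) (σ2 : ℝ) (Y : Fin n → ℝ) : ℝ :=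
  Y ⬝ᵥ Y - betaU X Y ⬝ᵥ (Xᵀ * X).mulVec (betaU X Y) + σ2 * (2 * (k₁ + k₂) - n)

/-- The model averaging weight `λ̂`. -/
def lamHat (α σ2 : ℝ) (X : Matrix (Fin n) (Fin k₁ ⊕ Fin k₂) ℝ) (Y : Fin n → ℝ) : ℝ :=
  Real.exp (-(α * rR X σ2 Y) / σ2) /
    (Real.exp (-(α * rR X σ2 Y) / σ2) + Real.exp (-(α * rU X σ2 Y) / σ2))

/-- Leung and Barron's model averaging estimator `β̃`. -/
def mavg (α σ2 : ℝ) (X : Matrix (Fin n) (Fin k₁ ⊕ Fin k₂) ℝ) (Y : Fin n → ℝ) :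
    (Fin k₁ ⊕ Fin k₂) → ℝ :=
  lamHat α σ2 X Y • betaR X Y + (1 - lamHat α σ2 X Y) • betaU X Y

/-- Projection on the column space of `X₁`. -/
def projR (X : Matrix (Fin n) (Fin k₁ ⊕ Fin k₂) ℝ) : Matrix (Fin n) (Fin n) ℝ :=
  X1 X * ((X1 X)ᵀ * X1 X)⁻¹ * (X1 X)ᵀ

/-- Projection on the column space of `X`. -/
def projU (X : Matrix (Fin n) (Fin k₁ ⊕ Fin k₂) ℝ) : Matrix (Fin n) (Fin n) ℝ :=
  X * (Xᵀ * X)⁻¹ * Xᵀ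

/-- The distribution `P_{n,β,σ}` of `Y = Xβ + u`, `u ~ N(0, σ² Iₙ)`. -/
def Pmeas (X : Matrix (Fin n) (Fin k₁ ⊕ Fin k₂) ℝ) (β : (Fin k₁ ⊕ Fin k₂) → ℝ) (σ2 : ℝ) :
    Measure (Fin n → ℝ) :=
  (gaussPi (Fin n) σ2).map (fun u => X.mulVec β + u)

/-- The function `h_{a,b}(ξ) = ξ / (1 + a exp(−ξ²/b))`. -/
def hfun (a b ξ : ℝ) : ℝ := ξ / (1 + a * Real.exp (-ξ ^ 2 / b))

/-- The inverse `g_{a,b}` of `h_{a,b}`. -/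
def gfun (a b : ℝ) : ℝ → ℝ := Function.invFun (hfun a b)

open Classical in
/-- `g(‖w‖) w / ‖w‖`, with the convention that this is `0` for `w = 0`. -/
def gdir (a b : ℝ) {ι : Type*} [Fintype ι] (w : ι → ℝ) : ι → ℝ :=
  if w = 0 then 0 else (gfun a b (enorm2 w) / enorm2 w) • w


/-- The finite-sample density `f_{n,β,σ}` of `√n(β̃ − β)` (Theorem 3 of the paper). -/
def fdens {n k₁ k₂ : ℕ} (X : Matrix (Fin n) (Fin k₁ ⊕ Fin k₂) ℝ)
    (β : (Fin k₁ ⊕ Fin k₂) → ℝ) (σ2 α : ℝ) (t : (Fin k₁ ⊕ Fin k₂) → ℝ) : ℝ :=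
  let a := Real.exp (2 * α * k₂)
  let b := σ2 / α
  let S := (X2 X)ᵀ * (1 - projR X) * X2 X
  let w := (Real.sqrt n)⁻¹ • (msqrt S).mulVec ((t ∘ Sum.inr) + Real.sqrt n • (β ∘ Sum.inr))
  (2 * π * σ2) ^ (-((k₁ : ℝ) + k₂) / 2) * Real.sqrt (((n : ℝ)⁻¹ • (Xᵀ * X)).det) *
    Real.exp (-(enorm2 ((Real.sqrt n)⁻¹ •
        ((msqrt ((X1 X)ᵀ * X1 X)).mulVec (t ∘ Sum.inl) +
          ((msqrt ((X1 X)ᵀ * X1 X))⁻¹ * (X1 X)ᵀ * X2 X).mulVec (t ∘ Sum.inr)))) ^ 2 /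
      (2 * σ2)) *
    (1 + Real.exp (-(α / σ2) * gfun a b (enorm2 w) ^ 2 + 2 * α * k₂)) ^ (k₂ : ℕ) *
    (1 + (2 * α / σ2) * gfun a b (enorm2 w) ^ 2 *
        (1 + Real.exp ((α / σ2) * gfun a b (enorm2 w) ^ 2 - 2 * α * k₂))⁻¹)⁻¹ *
    Real.exp (-(enorm2 (gdir a b w - (msqrt S).mulVec (β ∘ Sum.inr))) ^ 2 / (2 * σ2))

/-- The density `f_{∞,γ}` of the limiting distribution (formula (13) of the paper),
stated for a general symmetric positive definite matrix in place of `Q`. -/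
def fInfty {k₁ k₂ : ℕ} (Q : Matrix (Fin k₁ ⊕ Fin k₂) (Fin k₁ ⊕ Fin k₂) ℝ) (σ2 α : ℝ)
    (γ : Fin k₂ → ℝ) (t : (Fin k₁ ⊕ Fin k₂) → ℝ) : ℝ :=
  let a := Real.exp (2 * α * k₂)
  let b := σ2 / α
  let S := Q.toBlocks₂₂ - Q.toBlocks₂₁ * Q.toBlocks₁₁⁻¹ * Q.toBlocks₁₂
  let w := (msqrt S).mulVec ((t ∘ Sum.inr) + γ)
  (2 * π * σ2) ^ (-((k₁ : ℝ) + k₂) / 2) * Real.sqrt Q.det *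
    Real.exp (-(enorm2 ((msqrt Q.toBlocks₁₁).mulVec (t ∘ Sum.inl) +
        ((msqrt Q.toBlocks₁₁)⁻¹ * Q.toBlocks₁₂).mulVec (t ∘ Sum.inr))) ^ 2 / (2 * σ2)) *
    (1 + Real.exp (-(α / σ2) * gfun a b (enorm2 w) ^ 2 + 2 * α * k₂)) ^ (k₂ : ℕ) *
    (1 + (2 * α / σ2) * gfun a b (enorm2 w) ^ 2 *
        (1 + Real.exp ((α / σ2) * gfun a b (enorm2 w) ^ 2 - 2 * α * k₂))⁻¹)⁻¹ *
    Real.exp (-(enorm2 (gdir a b w - (msqrt S).mulVec γ)) ^ 2 / (2 * σ2))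

open ProbabilityTheory

lemma gaussPi_eq (n : ℕ) (s : ℝ≥0) (hs : s ≠ 0) :
    gaussPi (Fin n) (s : ℝ) = Measure.pi (fun _ : Fin n => gaussianReal 0 s) := by
  symm
  apply Measure.pi_eq
  intro S hS
  unfold gaussPi
  have hs0 : (0 : ℝ) < s := by positivity
  have key : ∀ x : Fin n → ℝ, (2 * π * (s : ℝ)) ^ (-(Fintype.card (Fin n) : ℝ) / 2) *
      Real.exp (-(enorm2 x) ^ 2 / (2 * s)) = ∏ i, gaussianPDFReal 0 s (x i) := by
    intro x
    simp only [gaussianPDFReal, Finset.prod_mul_distrib, ← Real.exp_sum, Finset.prod_const,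
      Finset.card_univ, Fintype.card_fin, sub_zero]
    congr 1
    · rw [Real.sqrt_eq_rpow, ← Real.rpow_neg (by positivity), ← Real.rpow_natCast,
        ← Real.rpow_mul (by positivity)]
      congr 1; ring
    · rw [enorm2, Real.sq_sqrt (by positivity), ← Finset.sum_div, Finset.sum_neg_distrib]
  simp_rw [key]
  rw [withDensity_apply _ (MeasurableSet.univ_pi hS), volume_pi, Measure.restrict_pi_pi,
    ← ofReal_integral_eq_lintegral_ofReal]
  · rw [integral_fintype_prod_eq_prod, ENNReal.ofReal_prod_of_nonneg]
    · refine Finset.prod_congr rfl fun i _ => ?_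
      rw [gaussianReal_apply_eq_integral _ hs]
    · intro i _
      exact integral_nonneg fun x => gaussianPDFReal_nonneg _ _ _
  · exact Integrable.fintype_prod (f := fun _ => gaussianPDFReal 0 s)
      (fun i => (integrable_gaussianPDFReal 0 s).restrict)
  · exact ae_of_all _ fun x => Finset.prod_nonneg fun i _ => gaussianPDFReal_nonneg _ _ _

lemma lint_lin (n : ℕ) (s : ℝ≥0) (hs : s ≠ 0) (a : Fin n → ℝ) :
    ∫⁻ u, ENNReal.ofReal ((a ⬝ᵥ u) ^ 2) ∂(gaussPi (Fin n) (s : ℝ)) =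
      ENNReal.ofReal (s * ∑ j, a j ^ 2) := by
  rw [gaussPi_eq n s hs]
  set μ := Measure.pi (fun _ : Fin n => gaussianReal 0 s)
  have hL : ∀ j, MemLp (fun x : ℝ => a j * x) 2 (gaussianReal 0 s) := fun j =>
    (memLp_id_gaussianReal' 2 (by simp)).const_mul (a j)
  have hL' : ∀ j, MemLp (fun u : Fin n → ℝ => a j * u j) 2 μ := fun j =>
    (hL j).comp_measurePreserving (measurePreserving_eval _ j)
  have hS : MemLp (fun u : Fin n → ℝ => ∑ j, a j * u j) 2 μ :=
    memLp_finsetSum _ fun j _ => hL' j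
  have hv := variance_sum_pi (μ := fun _ : Fin n => gaussianReal 0 s) (X := fun j x => a j * x) hL
  have hm : ∫ u, (∑ j, a j * u j) ∂μ = 0 := by
    rw [integral_finsetSum _ fun j _ => (hL' j).integrable (by norm_num)]
    refine Finset.sum_eq_zero fun j _ => ?_
    rw [integral_comp_eval (μ := fun _ : Fin n => gaussianReal 0 s) (f := fun x => a j * x)
      (hL j).1, integral_const_mul, integral_id_gaussianReal, mul_zero]
  rw [variance_eq_integral (by fun_prop)] at hv
  have e : (∑ i, fun ω : Fin n → ℝ => a i * ω i) = fun u => ∑ j, a j * u j := by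
    ext; simp
  rw [e, hm] at hv
  simp only [sub_zero] at hv
  simp only [dotProduct]
  rw [← ofReal_integral_eq_lintegral_ofReal hS.integrable_sq (ae_of_all _ fun _ => sq_nonneg _), hv]
  congr 1
  rw [Finset.mul_sum]
  refine Finset.sum_congr rfl fun j _ => ?_
  rw [variance_const_mul, variance_fun_id_gaussianReal]; ring

lemma inj_of_rank {n k₁ k₂ : ℕ} (X : Matrix (Fin n) (Fin k₁ ⊕ Fin k₂) ℝ)
    (h : X.rank = k₁ + k₂) : Function.Injective X.mulVec := by
  rw [Matrix.mulVec_injective_iff, linearIndependent_iff_card_eq_finrank_span]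
  rw [Matrix.rank_eq_finrank_span_cols] at h
  simp [Set.finrank, h]

lemma posDef_gram {n : ℕ} {ι : Type*} [Fintype ι] (X : Matrix (Fin n) ι ℝ)
    (h : Function.Injective X.mulVec) : (Xᵀ * X).PosDef := by
  have := PosDef.conjTranspose_mul_self X h
  rwa [conjTranspose_eq_transpose_of_trivial] at this

lemma sum_sq_le {ι : Type*} [Fintype ι] [DecidableEq ι] (A : Matrix ι ι ℝ) (hA : A.PosDef)
    (v : ι → ℝ) : ∑ i, v i ^ 2 ≤ A⁻¹.trace * (v ⬝ᵥ A.mulVec v) := by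
  have hu : IsUnit A.det := (Matrix.isUnit_iff_isUnit_det A).1 hA.isUnit
  have hT : Aᵀ = A := by
    have := hA.1
    rwa [Matrix.IsHermitian, conjTranspose_eq_transpose_of_trivial] at this
  rw [Matrix.trace, Finset.sum_mul]
  refine Finset.sum_le_sum fun i _ => ?_
  have h : ∀ s : ℝ, 0 ≤ (A⁻¹ i i) * (s * s) + (-2 * v i) * s + v ⬝ᵥ A.mulVec v := by
    intro s
    set e : ι → ℝ := Pi.single i 1
    have h0 := hA.posSemidef.dotProduct_mulVec_nonneg (v - s • A⁻¹.mulVec e)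
    have h1 : A *ᵥ (A⁻¹ *ᵥ e) = e := by
      rw [mulVec_mulVec, Matrix.mul_nonsing_inv _ hu, one_mulVec]
    have h2 : (A⁻¹ *ᵥ e) ⬝ᵥ A *ᵥ v = v i := by
      rw [dotProduct_mulVec, ← mulVec_transpose, hT, h1]; simp [e]
    have h3 : v ⬝ᵥ e = v i := by simp [e]
    have h4 : (A⁻¹ *ᵥ e) ⬝ᵥ e = A⁻¹ i i := by simp [e]
    simp only [star_trivial, mulVec_sub, mulVec_smul, sub_dotProduct, dotProduct_sub,
      smul_dotProduct, dotProduct_smul, h1, h2, h3, h4, smul_eq_mul] at h0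
    linarith
  have := discrim_le_zero h
  unfold discrim at this
  simp only [Matrix.diag_apply]
  nlinarith

lemma gram_bound {k₁ k₂ : ℕ} (hk₁ : 0 < k₁)
    (X : ∀ n : ℕ, Matrix (Fin n) (Fin k₁ ⊕ Fin k₂) ℝ)
    (hX : ∀ n, k₁ + k₂ ≤ n → (X n).rank = k₁ + k₂)
    (Q : Matrix (Fin k₁ ⊕ Fin k₂) (Fin k₁ ⊕ Fin k₂) ℝ) (hQ : Q.PosDef)
    (hlim : Tendsto (fun n : ℕ => (n : ℝ)⁻¹ • ((X n)ᵀ * X n)) atTop (𝓝 Q)) :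
    ∃ C : ℝ, 0 < C ∧ ∀ n, k₁ + k₂ ≤ n → ∀ v : (Fin k₁ ⊕ Fin k₂) → ℝ,
      n * ∑ i, v i ^ 2 ≤ C * (v ⬝ᵥ ((X n)ᵀ * X n).mulVec v) := by
  have hu : IsUnit Q.det := (Matrix.isUnit_iff_isUnit_det Q).1 hQ.isUnit
  have hc : ContinuousAt Inv.inv Q := by
    refine continuousAt_matrix_inv Q ?_
    have : (Ring.inverse : ℝ → ℝ) = Inv.inv := by ext; simp
    rw [this]
    exact continuousAt_inv₀ hu.ne_zero
  have ht : Tendsto (fun n : ℕ => ((n : ℝ)⁻¹ • ((X n)ᵀ * X n))⁻¹.trace) atTop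
      (𝓝 (Q⁻¹.trace)) :=
    ((continuous_id.matrix_trace).tendsto _).comp (hc.tendsto.comp hlim)
  obtain ⟨B, hB⟩ := ht.bddAbove_range
  refine ⟨max B 1, by positivity, fun n hn v => ?_⟩
  have hn0 : (0 : ℝ) < n := by
    have : 0 < n := by omega
    exact_mod_cast this
  have hP := posDef_gram (X n) (inj_of_rank _ (hX n hn))
  have hP' : ((n : ℝ)⁻¹ • ((X n)ᵀ * X n)).PosDef := hP.smul (by positivity)
  have h1 := sum_sq_le _ hP' v
  have h2 : ((n : ℝ)⁻¹ • ((X n)ᵀ * X n))⁻¹.trace ≤ max B 1 :=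
    (hB ⟨n, rfl⟩).trans (le_max_left _ _)
  have h3 : 0 ≤ v ⬝ᵥ ((X n)ᵀ * X n).mulVec v := hP.posSemidef.dotProduct_mulVec_nonneg v
  rw [smul_mulVec, dotProduct_smul, smul_eq_mul] at h1
  have h4 : (n : ℝ) * ∑ i, v i ^ 2 ≤ ((n : ℝ)⁻¹ • ((X n)ᵀ * X n))⁻¹.trace *
      (v ⬝ᵥ ((X n)ᵀ * X n).mulVec v) := by
    calc _ ≤ (n : ℝ) * _ := mul_le_mul_of_nonneg_left h1 hn0.le
      _ = _ := by field_simp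
  exact h4.trans (mul_le_mul_of_nonneg_right h2 h3)

lemma lamHat_bounds {n k₁ k₂ : ℕ} (α σ2 : ℝ) (X : Matrix (Fin n) (Fin k₁ ⊕ Fin k₂) ℝ)
    (Y : Fin n → ℝ) : 0 ≤ lamHat α σ2 X Y ∧ lamHat α σ2 X Y ≤ 1 ∧
      lamHat α σ2 X Y ≤ Real.exp (-(α * (rR X σ2 Y - rU X σ2 Y)) / σ2) := by
  unfold lamHat
  refine ⟨by positivity, ?_, ?_⟩
  · rw [div_le_one (by positivity)]
    linarith [Real.exp_pos (-(α * rU X σ2 Y) / σ2)]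
  · rw [div_le_iff₀ (by positivity), mul_add, ← Real.exp_add, ← Real.exp_add]
    have : -(α * (rR X σ2 Y - rU X σ2 Y)) / σ2 + -(α * rU X σ2 Y) / σ2 =
      -(α * rR X σ2 Y) / σ2 := by ring
    rw [this]
    linarith [Real.exp_pos (-(α * (rR X σ2 Y - rU X σ2 Y)) / σ2 + -(α * rR X σ2 Y) / σ2)]

lemma normal_U {n k₁ k₂ : ℕ} (X : Matrix (Fin n) (Fin k₁ ⊕ Fin k₂) ℝ)
    (hX : Function.Injective X.mulVec) (Y : Fin n → ℝ) :
    (Xᵀ * X).mulVec (betaU X Y) = Xᵀ.mulVec Y := by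
  have hu := (Matrix.isUnit_iff_isUnit_det _).1 (posDef_gram X hX).isUnit
  rw [betaU, mulVec_mulVec, Matrix.mul_nonsing_inv _ hu, one_mulVec]

lemma X_betaR {n k₁ k₂ : ℕ} (X : Matrix (Fin n) (Fin k₁ ⊕ Fin k₂) ℝ) (w : Fin k₁ → ℝ) :
    X.mulVec (Sum.elim w (fun _ => 0)) = (X1 X).mulVec w := by
  ext i
  simp [mulVec, dotProduct, X1]

lemma X1_inj {n k₁ k₂ : ℕ} (X : Matrix (Fin n) (Fin k₁ ⊕ Fin k₂) ℝ)
    (hX : Function.Injective X.mulVec) : Function.Injective (X1 X).mulVec := by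
  intro a b h
  rw [← X_betaR, ← X_betaR] at h
  have := hX h
  ext i
  simpa using congrFun this (Sum.inl i)

lemma dot_gram {n : ℕ} {ι : Type*} [Fintype ι] (X : Matrix (Fin n) ι ℝ) (v w : ι → ℝ) :
    v ⬝ᵥ (Xᵀ * X).mulVec w = X.mulVec v ⬝ᵥ X.mulVec w := by
  rw [← mulVec_mulVec, dotProduct_mulVec, vecMul_transpose]

lemma normal_R {n k₁ k₂ : ℕ} (X : Matrix (Fin n) (Fin k₁ ⊕ Fin k₂) ℝ)
    (hX : Function.Injective X.mulVec) (Y : Fin n → ℝ) :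
    X.mulVec (betaR X Y) ⬝ᵥ X.mulVec (betaR X Y) = X.mulVec (betaR X Y) ⬝ᵥ Y := by
  have hu := (Matrix.isUnit_iff_isUnit_det _).1 (posDef_gram _ (X1_inj X hX)).isUnit
  have h : ((X1 X)ᵀ * X1 X) *ᵥ (((X1 X)ᵀ * X1 X)⁻¹ *ᵥ ((X1 X)ᵀ *ᵥ Y)) = (X1 X)ᵀ *ᵥ Y := by
    rw [mulVec_mulVec, Matrix.mul_nonsing_inv _ hu, one_mulVec]
  rw [betaR, X_betaR, ← dot_gram, h, dotProduct_mulVec, vecMul_transpose]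

lemma rdiff {n k₁ k₂ : ℕ} (X : Matrix (Fin n) (Fin k₁ ⊕ Fin k₂) ℝ)
    (hX : Function.Injective X.mulVec) (σ2 : ℝ) (Y : Fin n → ℝ) :
    rR X σ2 Y - rU X σ2 Y =
      (betaU X Y - betaR X Y) ⬝ᵥ (Xᵀ * X).mulVec (betaU X Y - betaR X Y) - 2 * σ2 * k₂ := by
  have h1 := normal_R X hX Y
  have h2 : X.mulVec (betaR X Y) ⬝ᵥ X.mulVec (betaU X Y) = X.mulVec (betaR X Y) ⬝ᵥ Y := by
    rw [← dot_gram, normal_U X hX, dotProduct_mulVec, vecMul_transpose]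
  have h3 := dotProduct_comm (X.mulVec (betaU X Y)) (X.mulVec (betaR X Y))
  simp only [rR, rU, dot_gram, mulVec_sub, sub_dotProduct, dotProduct_sub]
  linarith

lemma det_bound {n k₁ k₂ : ℕ} (X : Matrix (Fin n) (Fin k₁ ⊕ Fin k₂) ℝ)
    (hX : Function.Injective X.mulVec) (α σ2 : ℝ) (hα : 0 < α) (hσ : 0 < σ2)
    (β : (Fin k₁ ⊕ Fin k₂) → ℝ) (u : Fin n → ℝ) :
    (mavg α σ2 X (X.mulVec β + u) - β) ⬝ᵥ
        (Xᵀ * X).mulVec (mavg α σ2 X (X.mulVec β + u) - β) ≤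
      2 * ((∑ i, (projU X i ⬝ᵥ u) ^ 2) + Real.exp (2 * α * k₂) * (σ2 / α)) := by
  have hu := (Matrix.isUnit_iff_isUnit_det _).1 (posDef_gram X hX).isUnit
  set Y := X.mulVec β + u with hY
  set l := lamHat α σ2 X Y with hl
  set d := betaU X Y - betaR X Y with hd
  set T := d ⬝ᵥ (Xᵀ * X).mulVec d with hTdef
  have hT : 0 ≤ T := (posDef_gram X hX).posSemidef.dotProduct_mulVec_nonneg d
  obtain ⟨l0, l1, l2⟩ := lamHat_bounds α σ2 X Y
  rw [← hl] at l0 l1 l2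
  have hk : l ^ 2 * T ≤ Real.exp (2 * α * k₂) * (σ2 / α) := by
    have e1 : -(α * (rR X σ2 Y - rU X σ2 Y)) / σ2 = 2 * α * k₂ + -(α * T / σ2) := by
      rw [rdiff X hX]; field_simp; ring
    rw [e1, Real.exp_add] at l2
    have e2 : Real.exp (-(α * T / σ2)) * T ≤ σ2 / α := by
      rw [Real.exp_neg, inv_mul_le_iff₀ (Real.exp_pos _)]
      have := Real.add_one_le_exp (α * T / σ2)
      calc T = (α * T / σ2) * (σ2 / α) := by field_simp
        _ ≤ _ := mul_le_mul_of_nonneg_right (by linarith) (by positivity)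
    calc l ^ 2 * T ≤ l * T := mul_le_mul_of_nonneg_right (by nlinarith) hT
      _ ≤ _ := mul_le_mul_of_nonneg_right l2 hT
      _ = Real.exp (2 * α * k₂) * (Real.exp (-(α * T / σ2)) * T) := by ring
      _ ≤ _ := mul_le_mul_of_nonneg_left e2 (Real.exp_pos _).le
  have hb : betaU X Y = β + betaU X u := by
    simp only [betaU, hY, mulVec_add]
    rw [mulVec_mulVec, mulVec_mulVec, Matrix.mul_assoc, Matrix.nonsing_inv_mul _ hu, one_mulVec]
  have hm : mavg α σ2 X Y - β = betaU X u - l • d := by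
    have : mavg α σ2 X Y = betaU X Y - l • d := by
      rw [mavg, ← hl, hd, smul_sub, sub_smul, one_smul]; abel
    rw [this, hb]; abel
  have hp : X.mulVec (betaU X u) = (projU X).mulVec u := by
    simp only [betaU, projU, mulVec_mulVec, Matrix.mul_assoc]
  have hZ : ∑ i, (projU X i ⬝ᵥ u) ^ 2 = X.mulVec (betaU X u) ⬝ᵥ X.mulVec (betaU X u) := by
    rw [hp]; simp only [dotProduct, mulVec, sq]
  have hpos : 0 ≤ (X.mulVec (betaU X u) + l • X.mulVec d) ⬝ᵥ
      (X.mulVec (betaU X u) + l • X.mulVec d) := by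
    simpa using dotProduct_star_self_nonneg (X.mulVec (betaU X u) + l • X.mulVec d)
  rw [hTdef, dot_gram] at hk
  rw [hm, dot_gram, hZ]
  simp only [mulVec_sub, mulVec_smul, sub_dotProduct, dotProduct_sub, add_dotProduct,
    dotProduct_add, smul_dotProduct, dotProduct_smul, smul_eq_mul] at hpos ⊢
  have h3 := dotProduct_comm (X.mulVec (betaU X u)) (X.mulVec d)
  rw [h3] at hpos ⊢
  nlinarith

lemma proj_frob {n k₁ k₂ : ℕ} (X : Matrix (Fin n) (Fin k₁ ⊕ Fin k₂) ℝ)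
    (hX : Function.Injective X.mulVec) :
    ∑ i, ∑ j, projU X i j ^ 2 = k₁ + k₂ := by
  have hu := (Matrix.isUnit_iff_isUnit_det _).1 (posDef_gram X hX).isUnit
  have hT : (projU X)ᵀ = projU X := by
    simp [projU, Matrix.transpose_mul, Matrix.transpose_nonsing_inv, Matrix.mul_assoc]
  have h1 : ∑ i, ∑ j, projU X i j ^ 2 = (projU X * (projU X)ᵀ).trace := by
    simp [Matrix.trace, Matrix.mul_apply, sq]
  have h2 : projU X * projU X = projU X := by
    calc projU X * projU X = X * ((Xᵀ * X)⁻¹ * (Xᵀ * X)) * (Xᵀ * X)⁻¹ * Xᵀ := by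
          simp only [projU, Matrix.mul_assoc]
      _ = _ := by rw [Matrix.nonsing_inv_mul _ hu, Matrix.mul_one, projU]
  rw [h1, hT, h2, projU, Matrix.mul_assoc, Matrix.trace_mul_comm, Matrix.mul_assoc,
    Matrix.nonsing_inv_mul _ hu, Matrix.trace_one]
  simp

lemma markov_Z {n k₁ k₂ : ℕ} (X : Matrix (Fin n) (Fin k₁ ⊕ Fin k₂) ℝ)
    (hX : Function.Injective X.mulVec) (s : ℝ) (hs : 0 < s) (r : ℝ) (hr : 0 < r) :
    gaussPi (Fin n) s {u | r ≤ ∑ i, (projU X i ⬝ᵥ u) ^ 2} ≤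
      ENNReal.ofReal (s * (k₁ + k₂) / r) := by
  lift s to ℝ≥0 using hs.le
  have hs' : s ≠ 0 := by rintro rfl; simp at hs
  have hmeas : ∀ i, Measurable fun u : Fin n → ℝ => ENNReal.ofReal ((projU X i ⬝ᵥ u) ^ 2) := by
    intro i
    simp only [dotProduct]
    fun_prop
  have hI : ∫⁻ u, ENNReal.ofReal (∑ i, (projU X i ⬝ᵥ u) ^ 2) ∂(gaussPi (Fin n) (s : ℝ)) =
      ENNReal.ofReal (s * (k₁ + k₂)) := by
    simp_rw [ENNReal.ofReal_sum_of_nonneg (fun i _ => sq_nonneg _)]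
    rw [lintegral_finsetSum _ fun i _ => hmeas i]
    simp_rw [lint_lin n s hs']
    rw [← ENNReal.ofReal_sum_of_nonneg (fun i _ => by positivity), ← Finset.mul_sum,
      proj_frob X hX]
  have hsub : {u | r ≤ ∑ i, (projU X i ⬝ᵥ u) ^ 2} ⊆
      {u | ENNReal.ofReal r ≤ ENNReal.ofReal (∑ i, (projU X i ⬝ᵥ u) ^ 2)} :=
    fun u hu => ENNReal.ofReal_le_ofReal hu
  refine (measure_mono hsub).trans ?_
  refine (meas_ge_le_lintegral_div ?_ (by simpa using hr) ENNReal.ofReal_ne_top).trans ?_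
  · refine Measurable.aemeasurable ?_
    simp only [dotProduct]
    fun_prop
  · rw [hI, ENNReal.ofReal_div_of_pos hr]

lemma main_bound {k₁ k₂ : ℕ} (hk₁ : 0 < k₁)
    (X : ∀ n : ℕ, Matrix (Fin n) (Fin k₁ ⊕ Fin k₂) ℝ)
    (hX : ∀ n, k₁ + k₂ ≤ n → (X n).rank = k₁ + k₂)
    (Q : Matrix (Fin k₁ ⊕ Fin k₂) (Fin k₁ ⊕ Fin k₂) ℝ) (hQ : Q.PosDef)
    (hlim : Tendsto (fun n : ℕ => (n : ℝ)⁻¹ • ((X n)ᵀ * X n)) atTop (𝓝 Q))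
    (σ α : ℝ) (hσ : 0 < σ) (hα : 0 < α) :
    Tendsto (fun M : ℝ => ⨆ n, ⨆ (_ : k₁ + k₂ ≤ n), ⨆ β : (Fin k₁ ⊕ Fin k₂) → ℝ,
        Pmeas (X n) β (σ ^ 2)
          {Y | M ≤ Real.sqrt n * enorm2 (mavg α (σ ^ 2) (X n) Y - β)})
      atTop (𝓝 (0 : ℝ≥0∞)) := by
  obtain ⟨C, hC, hb⟩ := gram_bound hk₁ X hX Q hQ hlim
  set K := Real.exp (2 * α * k₂) * (σ ^ 2 / α) with hK
  have hr : Tendsto (fun M : ℝ => M ^ 2 / (2 * C) - K) atTop atTop :=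
    tendsto_atTop_add_const_right _ _
      ((tendsto_pow_atTop two_ne_zero).atTop_div_const (by positivity))
  have hF : Tendsto (fun M : ℝ => ENNReal.ofReal (σ ^ 2 * (k₁ + k₂) / (M ^ 2 / (2 * C) - K)))
      atTop (𝓝 0) := by
    have := ENNReal.tendsto_ofReal (hr.const_div_atTop (σ ^ 2 * (k₁ + k₂)))
    simpa using this
  refine tendsto_of_tendsto_of_tendsto_of_le_of_le' tendsto_const_nhds hF
    (Eventually.of_forall fun _ => bot_le) ?_
  filter_upwards [hr.eventually_gt_atTop 0, eventually_ge_atTop 0] with M hM hM0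
  refine iSup_le fun n => iSup_le fun hn => iSup_le fun β => ?_
  have hinj := inj_of_rank _ (hX n hn)
  refine le_trans ?_ (markov_Z (X n) hinj (σ ^ 2) (by positivity) _ hM)
  have e : Pmeas (X n) β (σ ^ 2) = (gaussPi (Fin n) (σ ^ 2)).map
    (MeasurableEquiv.addLeft ((X n).mulVec β)) := rfl
  rw [e, MeasurableEquiv.map_apply]
  refine measure_mono fun u hu => ?_
  simp only [Set.mem_preimage, Set.mem_ofPred_eq, MeasurableEquiv.coe_addLeft] at hu ⊢
  have h1 := det_bound (X n) hinj α (σ ^ 2) hα (by positivity) β u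
  have h2 := hb n hn (mavg α (σ ^ 2) (X n) ((X n).mulVec β + u) - β)
  have h3 : M ^ 2 ≤ n * ∑ i, (mavg α (σ ^ 2) (X n) ((X n).mulVec β + u) - β) i ^ 2 := by
    have := pow_le_pow_left₀ hM0 hu 2
    rwa [mul_pow, enorm2, Real.sq_sqrt (by positivity), Real.sq_sqrt (by positivity)] at this
  have h4 := (h3.trans h2).trans (mul_le_mul_of_nonneg_left h1 hC.le)
  rw [sub_le_iff_le_add, div_le_iff₀ (by positivity)]
  linarith

/-- uniform `√n`-consistency of the model averaging estimator, and the resulting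
uniform `c_n`-consistency for any `c_n = o(√n)`. -/
theorem statement4 {k₁ k₂ : ℕ} (hk₁ : 0 < k₁) (hk₂ : 0 < k₂)
    (X : ∀ n : ℕ, Matrix (Fin n) (Fin k₁ ⊕ Fin k₂) ℝ)
    (hX : ∀ n, k₁ + k₂ ≤ n → (X n).rank = k₁ + k₂)
    (Q : Matrix (Fin k₁ ⊕ Fin k₂) (Fin k₁ ⊕ Fin k₂) ℝ) (hQ : Q.PosDef)
    (hlim : Tendsto (fun n : ℕ => (n : ℝ)⁻¹ • ((X n)ᵀ * X n)) atTop (𝓝 Q))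
    (σ α : ℝ) (hσ : 0 < σ) (hα : 0 < α) :
    Tendsto (fun M : ℝ => ⨆ n, ⨆ (_ : k₁ + k₂ ≤ n), ⨆ β : (Fin k₁ ⊕ Fin k₂) → ℝ,
        Pmeas (X n) β (σ ^ 2)
          {Y | M ≤ Real.sqrt n * enorm2 (mavg α (σ ^ 2) (X n) Y - β)})
      atTop (𝓝 (0 : ℝ≥0∞)) ∧
    ∀ ε : ℝ, 0 < ε → ∀ c : ℕ → ℝ, (∀ n, 0 ≤ c n) →
      Tendsto (fun n : ℕ => c n / Real.sqrt n) atTop (𝓝 (0 : ℝ)) →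
      Tendsto (fun n : ℕ => ⨆ β : (Fin k₁ ⊕ Fin k₂) → ℝ,
          Pmeas (X n) β (σ ^ 2)
            {Y | ε ≤ c n * enorm2 (mavg α (σ ^ 2) (X n) Y - β)})
        atTop (𝓝 (0 : ℝ≥0∞)) := by
  have h1 := main_bound hk₁ X hX Q hQ hlim σ α hσ hα
  refine ⟨h1, fun ε hε c hc0 hc => ?_⟩
  rw [ENNReal.tendsto_nhds_zero] at h1 ⊢
  intro δ hδ
  obtain ⟨M, hM, hM1⟩ := ((h1 δ hδ).and (eventually_gt_atTop 0)).exists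
  filter_upwards [eventually_ge_atTop (k₁ + k₂), hc.eventually_lt_const
    (show (0 : ℝ) < ε / M by positivity)] with n hn hcn
  refine le_trans (iSup_mono fun β => measure_mono ?_)
    ((le_iSup₂ (f := fun n (_ : k₁ + k₂ ≤ n) => ⨆ β : (Fin k₁ ⊕ Fin k₂) → ℝ,
        Pmeas (X n) β (σ ^ 2)
          {Y | M ≤ Real.sqrt n * enorm2 (mavg α (σ ^ 2) (X n) Y - β)}) n hn).trans hM)
  intro Y hY
  simp only [Set.mem_ofPred_eq] at hY ⊢
  set x := enorm2 (mavg α (σ ^ 2) (X n) Y - β)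
  have hn0 : (0 : ℝ) < Real.sqrt n := by
    have : 0 < n := by omega
    exact Real.sqrt_pos.2 (by exact_mod_cast this)
  have hcp : 0 < c n := by
    rcases (hc0 n).lt_or_eq with h | h
    · exact h
    · rw [← h, zero_mul] at hY; linarith
  rw [div_lt_div_iff₀ hn0 hM1] at hcn
  have : c n * M ≤ c n * (Real.sqrt n * x) := by nlinarith
  exact le_of_mul_le_mul_left this hcp

end
end

section
/- Suppose X'X/n → Q with Q symmetric positive definite, k₂ = 1, and Q₁₂ = 0. Then for every β ∈ ℝ^k with β₂ = 0 and every t ∈ ℝ^k there exists ρ₀ ∈ (0,∞) (depending only on t, Q, σ and α) such that sup_{δ>0} liminf_{n→∞} inf_{F̂_n(t)} sup_{ϑ : ‖ϑ−β‖ < ρ₀/√n} P_{n,ϑ,σ}(|F̂_n(t) − F_{n,ϑ,σ}(t)| > δ) ≥ 1/2, where the infimum extends over all estimators F̂_n(t), i.e., over all real-valued measurable functions of Y. -/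
open MeasureTheory Matrix Real Filter Topology ENNReal NNReal

noncomputable section

variable {n k₁ k₂ : ℕ}

/-- The limiting law (12): the distribution of
`B_∞γ + C_∞Z₁ + [1 + exp(2αk₂) exp(−α‖Z₂ + (Q₂₂ − Q₂₁Q₁₁⁻¹Q₁₂)^{1/2}γ‖²/σ²)]⁻¹
  · (D_∞Z₂ − B_∞γ)` with `Z₁ ~ N(0, σ²I_{k₁})`, `Z₂ ~ N(0, σ²I_{k₂})` independent. -/
def limitLaw {k₁ k₂ : ℕ} (Q : Matrix (Fin k₁ ⊕ Fin k₂) (Fin k₁ ⊕ Fin k₂) ℝ) (σ2 α : ℝ)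
    (γ : Fin k₂ → ℝ) : Measure ((Fin k₁ ⊕ Fin k₂) → ℝ) :=
  ((gaussPi (Fin k₁) σ2).prod (gaussPi (Fin k₂) σ2)).map
    (fun Z : (Fin k₁ → ℝ) × (Fin k₂ → ℝ) =>
      (fromRows (Q.toBlocks₁₁⁻¹ * Q.toBlocks₁₂) (-1)).mulVec γ +
      (fromRows (msqrt Q.toBlocks₁₁)⁻¹ 0).mulVec Z.1 +
      (1 + Real.exp (2 * α * k₂) *
          Real.exp (-α * (enorm2 (Z.2 +
            (msqrt (Q.toBlocks₂₂ - Q.toBlocks₂₁ * Q.toBlocks₁₁⁻¹ * Q.toBlocks₁₂)).mulVec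
              γ)) ^ 2 / σ2))⁻¹ •
        ((fromRows
            (-(Q.toBlocks₁₁⁻¹ * Q.toBlocks₁₂ *
              (msqrt (Q.toBlocks₂₂ - Q.toBlocks₂₁ * Q.toBlocks₁₁⁻¹ * Q.toBlocks₁₂))⁻¹))
            ((msqrt (Q.toBlocks₂₂ - Q.toBlocks₂₁ * Q.toBlocks₁₁⁻¹ * Q.toBlocks₁₂))⁻¹)).mulVec
            Z.2 -
          (fromRows (Q.toBlocks₁₁⁻¹ * Q.toBlocks₁₂) (-1)).mulVec γ))



/-! ### Gaussian facts -/

/-- The (real) density of `gaussPi`. -/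
def gpd (ι : Type*) [Fintype ι] (σ2 : ℝ) (x : ι → ℝ) : ℝ :=
  (2 * π * σ2) ^ (-(Fintype.card ι : ℝ) / 2) * Real.exp (-(enorm2 x) ^ 2 / (2 * σ2))

lemma enorm2_sq {ι : Type*} [Fintype ι] (v : ι → ℝ) : enorm2 v ^ 2 = ∑ i, v i ^ 2 :=
  Real.sq_sqrt (Finset.sum_nonneg fun _ _ => sq_nonneg _)

lemma gaussPi_eq_s13 (ι : Type*) [Fintype ι] (σ2 : ℝ) :
    gaussPi ι σ2 = volume.withDensity fun x => ENNReal.ofReal (gpd ι σ2 x) := rfl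

lemma gpd_continuous (ι : Type*) [Fintype ι] (σ2 : ℝ) : Continuous (gpd ι σ2) := by
  unfold gpd
  simp_rw [enorm2_sq]
  fun_prop

lemma gpd_pos (ι : Type*) [Fintype ι] {σ2 : ℝ} (h : 0 < σ2) (x : ι → ℝ) : 0 < gpd ι σ2 x := by
  unfold gpd; positivity

lemma gaussPi_integral_cexp {ι : Type*} [Fintype ι] {σ2 : ℝ} (h : 0 < σ2) (τ : ι → ℝ) :
    ∫ x, Complex.exp (((τ ⬝ᵥ x : ℝ) : ℂ) * Complex.I) ∂(gaussPi ι σ2) =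
      Complex.exp (((-(σ2 / 2) * (τ ⬝ᵥ τ) : ℝ) : ℂ)) := by
  rw [gaussPi_eq_s13, integral_withDensity_eq_integral_toReal_smul
    ((gpd_continuous ι σ2).measurable.ennreal_ofReal)
    (Filter.Eventually.of_forall fun _ => ENNReal.ofReal_lt_top)]
  have hb : 0 < (((1 / (2 * σ2) : ℝ)) : ℂ).re := by
    rw [Complex.ofReal_re]; positivity
  have key := GaussianFourier.integral_cexp_neg_mul_sum_add (ι := ι) hb
    (fun i => (τ i : ℂ) * Complex.I)
  have h1 : ∀ x : ι → ℝ, (ENNReal.ofReal (gpd ι σ2 x)).toReal •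
      Complex.exp (((τ ⬝ᵥ x : ℝ) : ℂ) * Complex.I) =
      (((2 * π * σ2) ^ (-(Fintype.card ι : ℝ) / 2) : ℝ) : ℂ) *
      Complex.exp (-((1 / (2 * σ2) : ℝ) : ℂ) * ∑ i, (x i : ℂ) ^ 2 +
        ∑ i, (τ i : ℂ) * Complex.I * x i) := by
    intro x
    rw [ENNReal.toReal_ofReal (gpd_pos ι h x).le, gpd, enorm2_sq, Complex.exp_add,
      Complex.real_smul, dotProduct]
    push_cast
    rw [mul_assoc]
    congr 3
    · ring_nf
    · rw [Finset.sum_mul]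
      exact Finset.sum_congr rfl fun i _ => by ring
  simp_rw [h1]
  rw [integral_const_mul, key, ← mul_assoc]
  have h2 : (((2 * π * σ2) ^ (-(Fintype.card ι : ℝ) / 2) : ℝ) : ℂ) *
      ((π : ℂ) / ((1 / (2 * σ2) : ℝ) : ℂ)) ^ ((Fintype.card ι : ℂ) / 2) = 1 := by
    have : ((π : ℂ) / ((1 / (2 * σ2) : ℝ) : ℂ)) ^ ((Fintype.card ι : ℂ) / 2) =
        (((2 * π * σ2) ^ ((Fintype.card ι : ℝ) / 2) : ℝ) : ℂ) := by
      rw [Complex.ofReal_cpow (by positivity)]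
      push_cast
      congr 1
      field_simp
    rw [this, ← Complex.ofReal_mul, ← Real.rpow_add (by positivity)]
    simp [neg_div]
  rw [h2, one_mul]
  congr 1
  have h3 : ∀ i, ((τ i : ℂ) * Complex.I) ^ 2 = -((τ i : ℂ) * τ i) := by
    intro i; rw [mul_pow, Complex.I_sq]; ring
  simp_rw [h3, Finset.sum_neg_distrib, dotProduct]
  push_cast
  have : (σ2 : ℂ) ≠ 0 := by exact_mod_cast h.ne'
  field_simp
  ring

lemma gaussPi_prob (ι : Type*) [Fintype ι] {σ2 : ℝ} (h : 0 < σ2) :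
    IsProbabilityMeasure (gaussPi ι σ2) := by
  have := gaussPi_integral_cexp (ι := ι) h 0
  simp only [zero_dotProduct, Complex.ofReal_zero, zero_mul, Complex.exp_zero, mul_zero,
    integral_const, Complex.real_smul, mul_one] at this
  have h1 : (gaussPi ι σ2).real Set.univ = 1 := by exact_mod_cast this
  constructor
  rw [Measure.real, ENNReal.toReal_eq_one_iff] at h1
  exact h1

lemma gpd_integrable (ι : Type*) [Fintype ι] {σ2 : ℝ} (h : 0 < σ2) :
    Integrable (gpd ι σ2) := by
  have := (gaussPi_prob ι h).measure_univ
  rw [gaussPi_eq_s13, withDensity_apply _ MeasurableSet.univ, Measure.restrict_univ] at this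
  refine ⟨(gpd_continuous ι σ2).aestronglyMeasurable, ?_⟩
  rw [hasFiniteIntegral_iff_ofReal (Eventually.of_forall fun x => (gpd_pos ι h x).le), this]
  exact ENNReal.one_lt_top

lemma gaussPi_apply {ι : Type*} [Fintype ι] {σ2 : ℝ} (h : 0 < σ2) {E : Set (ι → ℝ)}
    (hE : MeasurableSet E) :
    (gaussPi ι σ2 E).toReal = ∫ x in E, gpd ι σ2 x := by
  rw [gaussPi_eq_s13, withDensity_apply _ hE, ← ofReal_integral_eq_lintegral_ofReal
    (gpd_integrable ι h).integrableOn (Eventually.of_forall fun x => (gpd_pos ι h x).le),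
    ENNReal.toReal_ofReal]
  exact integral_nonneg fun x => (gpd_pos ι h x).le

lemma gpd_integral (ι : Type*) [Fintype ι] {σ2 : ℝ} (h : 0 < σ2) :
    ∫ x, gpd ι σ2 x = 1 := by
  have := gaussPi_apply (ι := ι) h MeasurableSet.univ
  rw [(gaussPi_prob ι h).measure_univ] at this
  simpa using this.symm

lemma gaussPi_shift_apply {ι : Type*} [Fintype ι] {σ2 : ℝ} (h : 0 < σ2) {E : Set (ι → ℝ)}
    (hE : MeasurableSet E) (w : ι → ℝ) :
    ((gaussPi ι σ2).map (fun u => w + u) E).toReal = ∫ y in E, gpd ι σ2 (y - w) := by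
  rw [Measure.map_apply (by fun_prop) hE, gaussPi_apply h (hE.preimage (by fun_prop)),
    ← integral_indicator hE, ← integral_indicator (hE.preimage (by fun_prop)),
    ← integral_sub_right_eq_self _ w]
  congr 1
  ext y
  have : (y - w ∈ (fun u => w + u) ⁻¹' E) ↔ y ∈ E := by
    rw [Set.mem_preimage, add_sub_cancel]
  by_cases hy : y ∈ E
  · rw [Set.indicator_of_mem hy, Set.indicator_of_mem (this.2 hy)]
  · rw [Set.indicator_of_notMem hy, Set.indicator_of_notMem (fun h' => hy (this.1 h'))]

lemma gpd_mul {ι : Type*} [Fintype ι] {σ2 : ℝ} (h : 0 < σ2) (y w w' : ι → ℝ) :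
    gpd ι σ2 (y - w) ^ 2 = Real.exp ((∑ i, (w i - w' i) ^ 2) / σ2) *
      gpd ι σ2 (y - w') * gpd ι σ2 (y - (w + (w - w'))) := by
  unfold gpd
  set C := (2 * π * σ2) ^ (-(Fintype.card ι : ℝ) / 2)
  simp_rw [enorm2_sq]
  have : ∀ a b c d e : ℝ, e + e = a + b + d → (C * rexp e) ^ 2 = rexp a * (C * rexp b) * (C * rexp d) := by
    intro a b c d e hh
    calc (C * rexp e) ^ 2 = C * C * (rexp (e + e)) := by rw [Real.exp_add]; ring
      _ = _ := by rw [hh, Real.exp_add, Real.exp_add]; ring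
  apply this _ _ 0
  field_simp
  simp only [neg_add_eq_sub, Finset.mul_sum, ← Finset.sum_neg_distrib, Finset.sum_mul, ← Finset.sum_add_distrib, Pi.sub_apply, Pi.add_apply]
  exact Finset.sum_congr rfl fun i _ => by ring

lemma gauss_tv {ι : Type*} [Fintype ι] {σ2 : ℝ} (h : 0 < σ2) {E : Set (ι → ℝ)}
    (hE : MeasurableSet E) (w w' : ι → ℝ) {c : ℝ} (hc : 0 < c) :
    ((gaussPi ι σ2).map (fun u => w + u) E).toReal ≤
      ((gaussPi ι σ2).map (fun u => w' + u) E).toReal +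
        (c / 2 + (Real.exp ((∑ i, (w i - w' i) ^ 2) / σ2) - 1) / (2 * c)) := by
  rw [gaussPi_shift_apply h hE, gaussPi_shift_apply h hE]
  set K := Real.exp ((∑ i, (w i - w' i) ^ 2) / σ2) with hK
  set w'' := w + (w - w') with hw''
  have hKpos : 0 < K := Real.exp_pos _
  have hi : ∀ v : ι → ℝ, Integrable (fun y => gpd ι σ2 (y - v)) := fun v =>
    (gpd_integrable ι h).comp_sub_right v
  have hone : ∀ v : ι → ℝ, ∫ y, gpd ι σ2 (y - v) = 1 := fun v => by
    rw [integral_sub_right_eq_self (gpd ι σ2) v, gpd_integral ι h]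
  let g : (ι → ℝ) → ℝ := fun y => c / 2 * gpd ι σ2 (y - w') +
    1 / (2 * c) * (K * gpd ι σ2 (y - w'') - 2 * gpd ι σ2 (y - w) + gpd ι σ2 (y - w'))
  have hgi : Integrable g := by
    refine ((hi w').const_mul _).add (Integrable.const_mul ?_ _)
    exact (((hi w'').const_mul _).sub ((hi w).const_mul _)).add (hi w')
  have hpt : ∀ y, 0 ≤ g y ∧ gpd ι σ2 (y - w) ≤ gpd ι σ2 (y - w') + g y := by
    intro y
    have hm := gpd_mul h y w w'
    rw [← hK, ← hw''] at hm
    have p0 := gpd_pos ι h (y - w)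
    have p1 := gpd_pos ι h (y - w')
    have p2 := gpd_pos ι h (y - w'')
    simp only [g]
    set p := gpd ι σ2 (y - w)
    set p' := gpd ι σ2 (y - w')
    set p'' := gpd ι σ2 (y - w'')
    have hsq : K * p'' - 2 * p + p' = (p - p') ^ 2 / p' := by
      field_simp
      nlinarith
    rw [hsq]
    constructor
    · positivity
    · have : 0 ≤ (c * p' - (p - p')) ^ 2 / (2 * c * p') := by positivity
      have e : (c * p' - (p - p')) ^ 2 / (2 * c * p') =
        p' + (c / 2 * p' + 1 / (2 * c) * ((p - p') ^ 2 / p')) - p := by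
        field_simp
        ring
      linarith
  have hgint : ∫ y, g y = c / 2 + (K - 1) / (2 * c) := by
    have e : g = fun y => ((c / 2 + 1 / (2 * c)) * gpd ι σ2 (y - w') +
        K / (2 * c) * gpd ι σ2 (y - w'')) - 1 / c * gpd ι σ2 (y - w) := by
      funext y
      simp only [g]
      field_simp
      ring
    have hadd : Integrable (fun y => (c / 2 + 1 / (2 * c)) * gpd ι σ2 (y - w') +
        K / (2 * c) * gpd ι σ2 (y - w'')) := ((hi w').const_mul _).add ((hi w'').const_mul _)
    rw [e, integral_sub hadd ((hi w).const_mul _),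
      integral_add ((hi w').const_mul _) ((hi w'').const_mul _), integral_const_mul,
      integral_const_mul, integral_const_mul, hone, hone, hone]
    field_simp
    ring
  calc ∫ y in E, gpd ι σ2 (y - w) ≤ ∫ y in E, (gpd ι σ2 (y - w') + g y) :=
        integral_mono (hi w).integrableOn ((hi w').integrableOn.add hgi.integrableOn)
          fun y => (hpt y).2
    _ = (∫ y in E, gpd ι σ2 (y - w')) + ∫ y in E, g y :=
        integral_add (hi w').integrableOn hgi.integrableOn
    _ ≤ (∫ y in E, gpd ι σ2 (y - w')) + ∫ y, g y := by
        refine add_le_add le_rfl ?_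
        exact setIntegral_le_integral hgi (Eventually.of_forall fun y => (hpt y).1)
    _ = _ := by rw [hgint]


/-! ### Weak convergence of Gaussian linear images -/

/-- The law of `M u` on Euclidean space, for `u ~ N(0, σ² I)`. -/
def lawE {κ ι : Type*} [Fintype κ] [Fintype ι] (σ2 : ℝ) (h : 0 < σ2) (M : Matrix κ ι ℝ) :
    ProbabilityMeasure (EuclideanSpace ℝ κ) :=
  ⟨(gaussPi ι σ2).map (fun u => WithLp.toLp 2 (M *ᵥ u)),
    haveI := gaussPi_prob ι h
    Measure.isProbabilityMeasure_map (by
      have : Continuous (fun u : ι → ℝ => (WithLp.toLp 2 (M *ᵥ u) : EuclideanSpace ℝ κ)) := by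
        fun_prop
      exact this.measurable.aemeasurable)⟩

lemma lawE_meas {κ ι : Type*} [Fintype κ] [Fintype ι] (M : Matrix κ ι ℝ) :
    Measurable (fun u : ι → ℝ => (WithLp.toLp 2 (M *ᵥ u) : EuclideanSpace ℝ κ)) := by
  have : Continuous (fun u : ι → ℝ => (WithLp.toLp 2 (M *ᵥ u) : EuclideanSpace ℝ κ)) := by
    fun_prop
  exact this.measurable

lemma lawE_charFun {κ ι : Type*} [Fintype κ] [Fintype ι] (σ2 : ℝ) (h : 0 < σ2)
    (M : Matrix κ ι ℝ) (τ : EuclideanSpace ℝ κ) :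
    charFun (lawE σ2 h M : Measure (EuclideanSpace ℝ κ)) τ =
      Complex.exp (((-(σ2 / 2) * (τ.ofLp ⬝ᵥ ((M * Mᵀ) *ᵥ τ.ofLp)) : ℝ) : ℂ)) := by
  have e : τ.ofLp ⬝ᵥ ((M * Mᵀ) *ᵥ τ.ofLp) = (Mᵀ *ᵥ τ.ofLp) ⬝ᵥ (Mᵀ *ᵥ τ.ofLp) := by
    rw [← mulVec_mulVec, dotProduct_mulVec, ← mulVec_transpose]
  rw [e, ← gaussPi_integral_cexp h, charFun_apply]
  change ∫ x, _ ∂((gaussPi ι σ2).map (fun u => WithLp.toLp 2 (M *ᵥ u))) = _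
  rw [integral_map (lawE_meas M).aemeasurable (by fun_prop)]
  congr 1
  ext u
  congr 3
  rw [mulVec_transpose, ← dotProduct_mulVec]
  simp [PiLp.inner_apply, dotProduct]

lemma lawE_tendsto {κ : Type*} [Fintype κ] (σ2 : ℝ) (h : 0 < σ2)
    (M : ∀ n : ℕ, Matrix κ (Fin n) ℝ) (A : Matrix κ κ ℝ)
    (hM : Tendsto (fun n => M n * (M n)ᵀ) atTop (𝓝 (A * Aᵀ))) :
    Tendsto (fun n => lawE σ2 h (M n)) atTop (𝓝 (lawE σ2 h A)) := by
  apply ProbabilityMeasure.tendsto_of_tendsto_charFun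
  intro τ
  simp_rw [lawE_charFun]
  have hc : Continuous (fun B : Matrix κ κ ℝ =>
      Complex.exp (((-(σ2 / 2) * (τ.ofLp ⬝ᵥ (B *ᵥ τ.ofLp)) : ℝ) : ℂ))) := by
    fun_prop
  exact (hc.tendsto _).comp hM

lemma gauss_conv {κ : Type*} [Fintype κ] (σ2 : ℝ) (h : 0 < σ2)
    (M : ∀ n : ℕ, Matrix κ (Fin n) ℝ) (A : Matrix κ κ ℝ)
    (hM : Tendsto (fun n => M n * (M n)ᵀ) atTop (𝓝 (A * Aᵀ)))
    (c : ℕ → ℝ × (κ → ℝ)) (c0 : ℝ × (κ → ℝ)) (hc : Tendsto c atTop (𝓝 c0))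
    (Ψ : (κ → ℝ) × (ℝ × (κ → ℝ)) → (κ → ℝ)) (hΨ : Continuous Ψ) (t : κ → ℝ)
    (hnull : ∀ i, gaussPi κ σ2 {z | Ψ (A *ᵥ z, c0) i = t i} = 0) :
    Tendsto (fun n => gaussPi (Fin n) σ2 {u | ∀ i, Ψ (M n *ᵥ u, c n) i ≤ t i}) atTop
      (𝓝 (gaussPi κ σ2 {z | ∀ i, Ψ (A *ᵥ z, c0) i ≤ t i})) := by
  have hE : Tendsto (fun n => (lawE σ2 h (M n)).prod (diracProba (c n))) atTop
      (𝓝 ((lawE σ2 h A).prod (diracProba c0))) := by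
    have := (ProbabilityMeasure.continuous_prod (α := EuclideanSpace ℝ κ)
      (β := ℝ × (κ → ℝ))).tendsto (lawE σ2 h A, diracProba c0)
    exact this.comp ((lawE_tendsto σ2 h M A hM).prodMk_nhds
      ((continuous_diracProba.tendsto c0).comp hc))
  let Φ : EuclideanSpace ℝ κ × (ℝ × (κ → ℝ)) → κ → ℝ := fun p => Ψ (p.1.ofLp, p.2)
  have hΦ : Continuous Φ := by
    apply hΨ.comp
    fun_prop
  have hΦi : ∀ i, Continuous fun p => Φ p i := fun i => (continuous_apply i).comp hΦ
  have hcl : IsClosed {p | ∀ i, Φ p i ≤ t i} := by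
    simp only [Set.setOf_forall]
    exact isClosed_iInter fun i => isClosed_le (hΦi i) continuous_const
  have hop : IsOpen {p | ∀ i, Φ p i < t i} := by
    simp only [Set.setOf_forall]
    exact isOpen_iInter_of_finite fun i => isOpen_lt (hΦi i) continuous_const
  have happ : ∀ {ι : Type} [Fintype ι] (B : Matrix κ ι ℝ) (d : ℝ × (κ → ℝ))
      (S : Set (EuclideanSpace ℝ κ × (ℝ × (κ → ℝ)))) (_ : MeasurableSet S),
      (((lawE σ2 h B).prod (diracProba d) : ProbabilityMeasure _) : Measure _) S =
        gaussPi ι σ2 {u | (WithLp.toLp 2 (B *ᵥ u), d) ∈ S} := by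
    intro ι _ B d S hS
    rw [ProbabilityMeasure.toMeasure_prod]
    change (((gaussPi ι σ2).map (fun u => WithLp.toLp 2 (B *ᵥ u))).prod (Measure.dirac d)) S = _
    haveI := gaussPi_prob ι h
    rw [Measure.prod_dirac, Measure.map_map (by fun_prop) (lawE_meas B),
      Measure.map_apply _ hS]
    · rfl
    · exact Measurable.comp (by fun_prop) (lawE_meas B)
  have happ' : ∀ (d : ℝ × (κ → ℝ))
      (S : Set (EuclideanSpace ℝ κ × (ℝ × (κ → ℝ)))) (_ : MeasurableSet S),
      (((lawE σ2 h A).prod (diracProba d) : ProbabilityMeasure _) : Measure _) S =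
        gaussPi κ σ2 {u | (WithLp.toLp 2 (A *ᵥ u), d) ∈ S} := by
    intro d S hS
    rw [ProbabilityMeasure.toMeasure_prod]
    change (((gaussPi κ σ2).map (fun u => WithLp.toLp 2 (A *ᵥ u))).prod (Measure.dirac d)) S = _
    haveI := gaussPi_prob κ h
    rw [Measure.prod_dirac, Measure.map_map (by fun_prop) (lawE_meas A),
      Measure.map_apply _ hS]
    · rfl
    · exact Measurable.comp (by fun_prop) (lawE_meas A)
  have hfr : frontier {p | ∀ i, Φ p i ≤ t i} ⊆ ⋃ i, {p | Φ p i = t i} := by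
    intro p hp
    rw [hcl.frontier_eq] at hp
    obtain ⟨h1, h2⟩ := hp
    by_contra hne
    simp only [Set.mem_iUnion, Set.mem_setOf_eq, not_exists] at hne
    apply h2
    refine interior_maximal (fun q hq i => (hq i).le) hop ?_
    exact fun i => lt_of_le_of_ne (h1 i) (hne i)
  have hfr0 : (((lawE σ2 h A).prod (diracProba c0) : ProbabilityMeasure _) : Measure _)
      (frontier {p | ∀ i, Φ p i ≤ t i}) = 0 := by
    refine measure_mono_null hfr ?_
    rw [measure_iUnion_null_iff]
    intro i
    rw [happ' c0 _ (measurableSet_eq_fun (hΦi i).measurable measurable_const)]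
    exact hnull i
  have := ProbabilityMeasure.tendsto_measure_of_null_frontier_of_tendsto' hE hfr0
  rw [happ' c0 _ hcl.measurableSet] at this
  simp_rw [happ (M _) (c _) _ hcl.measurableSet] at this
  exact this


/-! ### Algebra of the model averaging estimator -/

/-- The map giving `√n(β̃ − ϑ)` in terms of `√n(β̂(U) − ϑ)`. -/
def Psi (k₁ : ℕ) (α σ2 γ : ℝ)
    (p : ((Fin k₁ ⊕ Fin 1) → ℝ) × (ℝ × ((Fin k₁ ⊕ Fin 1) → ℝ))) : (Fin k₁ ⊕ Fin 1) → ℝ :=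
  fun i => p.1 i - (p.1 (Sum.inr 0) + γ) * p.2.2 i /
    (1 + Real.exp (α * (p.2.1 * (p.1 (Sum.inr 0) + γ) ^ 2 / σ2 - 2)))

lemma Psi_continuous (k₁ : ℕ) (α σ2 γ : ℝ) : Continuous (Psi k₁ α σ2 γ) := by
  unfold Psi
  refine continuous_pi fun i => ?_
  refine Continuous.sub (by fun_prop) (Continuous.div (by fun_prop) (by fun_prop) ?_)
  intro p
  positivity

/-- The direction `(-Q₁₁⁻¹ Q₁₂, 1)`. -/
def cvec {k₁ : ℕ} (q : Matrix (Fin k₁ ⊕ Fin 1) (Fin k₁ ⊕ Fin 1) ℝ) : (Fin k₁ ⊕ Fin 1) → ℝ :=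
  Sum.elim (-(q.toBlocks₁₁⁻¹ *ᵥ fun i => q (Sum.inl i) (Sum.inr 0))) (fun _ => 1)

lemma cvec_spec {k₁ : ℕ} (q : Matrix (Fin k₁ ⊕ Fin 1) (Fin k₁ ⊕ Fin 1) ℝ)
    (h : IsUnit q.toBlocks₁₁.det) (i : Fin k₁) : (q *ᵥ cvec q) (Sum.inl i) = 0 := by
  have e : (q *ᵥ cvec q) (Sum.inl i) =
      (q.toBlocks₁₁ *ᵥ (-(q.toBlocks₁₁⁻¹ *ᵥ fun i => q (Sum.inl i) (Sum.inr 0)))) i +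
        q (Sum.inl i) (Sum.inr 0) := by
    simp [mulVec, dotProduct, cvec, toBlocks₁₁]
  rw [e, mulVec_neg, mulVec_mulVec, mul_nonsing_inv _ h, one_mulVec]
  simp

lemma mavg_eq {n k₁ : ℕ} (hn : 0 < n) (X : Matrix (Fin n) (Fin k₁ ⊕ Fin 1) ℝ)
    (α σ2 γ : ℝ) (hσ : 0 < σ2)
    (hG : IsUnit (Xᵀ * X).det) (hG1 : IsUnit ((X1 X)ᵀ * X1 X).det)
    (ϑ : (Fin k₁ ⊕ Fin 1) → ℝ) (hϑ : Real.sqrt n * ϑ (Sum.inr 0) = γ) (u : Fin n → ℝ)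
    (i : Fin k₁ ⊕ Fin 1) :
    Real.sqrt n * (mavg α σ2 X (X *ᵥ ϑ + u) i - ϑ i) =
      Psi k₁ α σ2 γ ((Real.sqrt n • ((Xᵀ * X)⁻¹ * Xᵀ)) *ᵥ u,
        (cvec ((n : ℝ)⁻¹ • (Xᵀ * X)) ⬝ᵥ (((n : ℝ)⁻¹ • (Xᵀ * X)) *ᵥ cvec ((n : ℝ)⁻¹ • (Xᵀ * X))),
          cvec ((n : ℝ)⁻¹ • (Xᵀ * X)))) i := by
  set G := Xᵀ * X with hGdef
  set c := cvec ((n : ℝ)⁻¹ • G) with hc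
  set Y := X *ᵥ ϑ + u with hY
  have hn' : (0 : ℝ) < n := by exact_mod_cast hn
  have h11 : ((X1 X)ᵀ * X1 X) = G.toBlocks₁₁ := by
    ext a b
    simp [hGdef, X1, mul_apply, toBlocks₁₁]
  have hc2 : c (Sum.inr 0) = 1 := rfl
  have hGc : ∀ a : Fin k₁, (G *ᵥ c) (Sum.inl a) = 0 := by
    intro a
    have hu : IsUnit ((n : ℝ)⁻¹ • G).toBlocks₁₁.det := by
      have : ((n : ℝ)⁻¹ • G).toBlocks₁₁ = (n : ℝ)⁻¹ • G.toBlocks₁₁ := rfl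
      rw [this, det_smul, ← h11]
      exact (IsUnit.mk0 _ (by positivity)).mul hG1
    have := cvec_spec _ hu a
    rw [← hc, smul_mulVec, Pi.smul_apply, smul_eq_mul] at this
    exact (mul_eq_zero.1 this).resolve_left (by positivity)
  -- the unrestricted estimator
  set U := betaU X Y with hUdef
  have hGU : G *ᵥ U = Xᵀ *ᵥ Y := by
    rw [hUdef, betaU, mulVec_mulVec, mul_nonsing_inv _ hG, one_mulVec]
  have hU : U = ϑ + (G⁻¹ * Xᵀ) *ᵥ u := by
    rw [hUdef, betaU, hY, mulVec_add, mulVec_add, mulVec_mulVec, mulVec_mulVec, Matrix.mul_assoc, ← hGdef,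
      nonsing_inv_mul _ hG, one_mulVec, mulVec_mulVec]
  set x := U (Sum.inr 0) with hx
  -- the restricted estimator
  have hR : betaR X Y = U - x • c := by
    have hinr : ∀ j, (U - x • c) (Sum.inr j) = 0 := by
      intro j
      have : j = 0 := Subsingleton.elim _ _
      subst this
      simp [hc2, hx]
    have hinl : (fun a => (U - x • c) (Sum.inl a)) =
        ((X1 X)ᵀ * X1 X)⁻¹ *ᵥ ((X1 X)ᵀ *ᵥ Y) := by
      have h1 : (X1 X)ᵀ *ᵥ Y = ((X1 X)ᵀ * X1 X) *ᵥ (fun a => (U - x • c) (Sum.inl a)) := by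
        ext a
        have h2 : (G *ᵥ (U - x • c)) (Sum.inl a) = (Xᵀ *ᵥ Y) (Sum.inl a) := by
          rw [mulVec_sub, mulVec_smul, hGU]
          simp [hGc a]
        have h3 : (G *ᵥ (U - x • c)) (Sum.inl a) =
            (G.toBlocks₁₁ *ᵥ (fun a => (U - x • c) (Sum.inl a))) a := by
          simp only [mulVec, dotProduct, Fintype.sum_sum_type, hinr, mul_zero,
            Finset.sum_const_zero, add_zero]
          rfl
        rw [h11, ← h3, h2]
        rfl
      rw [h1, mulVec_mulVec, nonsing_inv_mul _ hG1, one_mulVec]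
    ext j
    rcases j with a | j
    · rw [betaR, Sum.elim_inl, ← hinl]
    · rw [betaR, Sum.elim_inr, hinr]
  have hGsymm : Gᵀ = G := by rw [hGdef, transpose_mul, transpose_transpose]
  have hquad : U ⬝ᵥ (G *ᵥ U) - betaR X Y ⬝ᵥ (G *ᵥ betaR X Y) = x ^ 2 * (c ⬝ᵥ (G *ᵥ c)) := by
    have hR2 : (betaR X Y) (Sum.inr 0) = 0 := rfl
    have hRc : betaR X Y ⬝ᵥ (G *ᵥ c) = 0 := by
      rw [dotProduct, Fintype.sum_sum_type]
      simp [hGc, hR2]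
    have hcR : c ⬝ᵥ (G *ᵥ betaR X Y) = 0 := by
      rw [dotProduct_mulVec, ← mulVec_transpose, hGsymm, dotProduct_comm, hRc]
    have hUe : U = betaR X Y + x • c := by rw [hR]; simp
    set R := betaR X Y
    rw [hUe, mulVec_add, mulVec_smul, dotProduct_add, add_dotProduct, add_dotProduct,
      dotProduct_smul, dotProduct_smul, smul_dotProduct, smul_dotProduct, hRc, hcR]
    simp only [smul_eq_mul]
    ring
  have hrr : rR X σ2 Y - rU X σ2 Y = x ^ 2 * (c ⬝ᵥ (G *ᵥ c)) - 2 * σ2 := by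
    rw [← hquad, rR, rU]
    push_cast
    ring
  have hlam : lamHat α σ2 X Y =
      1 / (1 + Real.exp (α * (x ^ 2 * (c ⬝ᵥ (G *ᵥ c)) / σ2 - 2))) := by
    have : Real.exp (-(α * rU X σ2 Y) / σ2) = Real.exp (-(α * rR X σ2 Y) / σ2) *
        Real.exp (α * (x ^ 2 * (c ⬝ᵥ (G *ᵥ c)) / σ2 - 2)) := by
      rw [← Real.exp_add]
      congr 1
      have : x ^ 2 * (c ⬝ᵥ (G *ᵥ c)) = rR X σ2 Y - rU X σ2 Y + 2 * σ2 := by rw [hrr]; ring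
      rw [this]
      field_simp
      ring
    rw [lamHat, this]
    field_simp
  have hm : mavg α σ2 X Y i = U i - lamHat α σ2 X Y * (x * c i) := by
    rw [mavg, hR]
    simp only [Pi.add_apply, Pi.smul_apply, Pi.sub_apply, smul_eq_mul]
    ring
  have hW : ∀ j, ((Real.sqrt n • (G⁻¹ * Xᵀ)) *ᵥ u) j = Real.sqrt n * (U j - ϑ j) := by
    intro j
    rw [hU, smul_mulVec]
    simp
  have hsx : Real.sqrt n * (U (Sum.inr 0) - ϑ (Sum.inr 0)) + γ = Real.sqrt n * x := by
    rw [← hϑ, hx]; ring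
  have hs : (c ⬝ᵥ (((n : ℝ)⁻¹ • G) *ᵥ c)) * (Real.sqrt n * x) ^ 2 =
      x ^ 2 * (c ⬝ᵥ (G *ᵥ c)) := by
    rw [smul_mulVec, dotProduct_smul, mul_pow, Real.sq_sqrt hn'.le, smul_eq_mul]
    field_simp
  rw [Psi]
  simp only [hW, hsx, hs]
  rw [hm, hlam]
  field_simp
  ring


/-! ### The limiting distribution function -/

/-- The shrinkage function of the limit. -/
def hh (α σ2 s ξ : ℝ) : ℝ := ξ - ξ / (1 + Real.exp (α * (s * ξ ^ 2 / σ2 - 2)))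

lemma hh_continuous (α σ2 s : ℝ) : Continuous (hh α σ2 s) := by
  unfold hh
  refine Continuous.sub (by fun_prop) (Continuous.div (by fun_prop) (by fun_prop) ?_)
  intro p
  positivity

lemma hh_eq (α σ2 s ξ : ℝ) :
    hh α σ2 s ξ = ξ * (1 - 1 / (1 + Real.exp (α * (s * ξ ^ 2 / σ2 - 2)))) := by
  unfold hh; ring

lemma hh_neg (α σ2 s ξ : ℝ) : hh α σ2 s (-ξ) = - hh α σ2 s ξ := by
  simp only [hh_eq, neg_sq]; ring

lemma hh_zero (α σ2 s : ℝ) : hh α σ2 s 0 = 0 := by simp [hh]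

lemma hh_factor_pos (y : ℝ) : 0 < 1 - 1 / (1 + Real.exp y) := by
  have : 1 / (1 + Real.exp y) < 1 := by
    rw [div_lt_one (by positivity)]
    linarith [Real.exp_pos y]
  linarith

lemma hh_lt_of_nonneg {α σ2 s : ℝ} (hα : 0 < α) (hσ : 0 < σ2) (hs : 0 < s) {x y : ℝ}
    (hx : 0 ≤ x) (hxy : x < y) : hh α σ2 s x < hh α σ2 s y := by
  rw [hh_eq, hh_eq]
  have h1 : x ^ 2 ≤ y ^ 2 := by gcongr
  have h2 : 1 - 1 / (1 + Real.exp (α * (s * x ^ 2 / σ2 - 2))) ≤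
      1 - 1 / (1 + Real.exp (α * (s * y ^ 2 / σ2 - 2))) := by
    gcongr
  calc _ ≤ x * (1 - 1 / (1 + Real.exp (α * (s * y ^ 2 / σ2 - 2)))) :=
        mul_le_mul_of_nonneg_left h2 hx
    _ < _ := mul_lt_mul_of_pos_right hxy (hh_factor_pos _)

lemma hh_strictMono {α σ2 s : ℝ} (hα : 0 < α) (hσ : 0 < σ2) (hs : 0 < s) :
    StrictMono (hh α σ2 s) := by
  intro x y hxy
  rcases le_or_gt 0 x with hx | hx
  · exact hh_lt_of_nonneg hα hσ hs hx hxy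
  · rcases le_or_gt y 0 with hy | hy
    · have := hh_lt_of_nonneg hα hσ hs (x := -y) (y := -x) (by linarith) (by linarith)
      rw [hh_neg, hh_neg] at this
      linarith
    · have h1 := hh_lt_of_nonneg hα hσ hs le_rfl hy
      have h2 := hh_lt_of_nonneg hα hσ hs (x := 0) (y := -x) le_rfl (by linarith)
      rw [hh_neg] at h2
      rw [hh_zero] at h1 h2
      linarith

lemma hh_one_lt (α σ2 s : ℝ) : hh α σ2 s 1 < 1 := by
  unfold hh
  have : 0 < 1 / (1 + Real.exp (α * (s * 1 ^ 2 / σ2 - 2))) := by positivity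
  linarith

/-- The limit of the direction `cvec`. -/
def e2 (k₁ : ℕ) : (Fin k₁ ⊕ Fin 1) → ℝ := Sum.elim 0 (fun _ => 1)

lemma Psi_inl (k₁ : ℕ) (α σ2 γ s : ℝ) (w : (Fin k₁ ⊕ Fin 1) → ℝ) (a : Fin k₁) :
    Psi k₁ α σ2 γ (w, (s, e2 k₁)) (Sum.inl a) = w (Sum.inl a) := by
  simp [Psi, e2]

lemma Psi_inr (k₁ : ℕ) (α σ2 γ s : ℝ) (w : (Fin k₁ ⊕ Fin 1) → ℝ) (j : Fin 1) :
    Psi k₁ α σ2 γ (w, (s, e2 k₁)) (Sum.inr j) = hh α σ2 s (w (Sum.inr 0) + γ) - γ := by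
  have : j = 0 := Subsingleton.elim _ _
  subst this
  simp [Psi, e2, hh]
  ring

lemma gaussPi_ac {ι : Type*} [Fintype ι] (σ2 : ℝ) : gaussPi ι σ2 ≪ volume :=
  withDensity_absolutelyContinuous _ _

lemma gaussPi_ac' {ι : Type*} [Fintype ι] {σ2 : ℝ} (h : 0 < σ2) : volume ≪ gaussPi ι σ2 := by
  rw [gaussPi_eq_s13]
  refine withDensity_absolutelyContinuous'
    ((gpd_continuous ι σ2).measurable.ennreal_ofReal).aemeasurable
    (Eventually.of_forall fun x => ?_)
  simpa using gpd_pos ι h x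

lemma gaussPi_null {κ : Type*} [Fintype κ] [DecidableEq κ] (σ2 : ℝ) (A : Matrix κ κ ℝ)
    (hA : IsUnit A.det) (i : κ) (S : Set ℝ) (hS : S.Subsingleton) :
    gaussPi κ σ2 {z | (A *ᵥ z) i ∈ S} = 0 := by
  apply gaussPi_ac
  have h1 : volume ((Function.eval i ⁻¹' S) : Set (κ → ℝ)) = 0 := by
    rw [volume_pi]
    exact Measure.pi_eval_preimage_null _ (hS.measure_zero _)
  have hdet : LinearMap.det (Matrix.toLin' A) ≠ 0 := by
    rw [LinearMap.det_toLin']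
    exact hA.ne_zero
  have h2 := Measure.addHaar_preimage_linearMap (volume : Measure (κ → ℝ)) hdet
    (Function.eval i ⁻¹' S)
  rw [h1, mul_zero] at h2
  exact h2

lemma phi_null {k₁ : ℕ} {α σ2 s : ℝ} (hα : 0 < α) (hσ : 0 < σ2) (hs : 0 < s) (γ : ℝ)
    (A : Matrix (Fin k₁ ⊕ Fin 1) (Fin k₁ ⊕ Fin 1) ℝ) (hA : IsUnit A.det)
    (t : (Fin k₁ ⊕ Fin 1) → ℝ) (i : Fin k₁ ⊕ Fin 1) :
    gaussPi _ σ2 {z | Psi k₁ α σ2 γ (A *ᵥ z, (s, e2 k₁)) i = t i} = 0 := by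
  rcases i with a | j
  · simp_rw [Psi_inl]
    exact gaussPi_null σ2 A hA (Sum.inl a) {t (Sum.inl a)} Set.subsingleton_singleton
  · simp_rw [Psi_inr]
    refine gaussPi_null σ2 A hA (Sum.inr 0) {x | hh α σ2 s (x + γ) - γ = t (Sum.inr j)} ?_
    intro x hx y hy
    have hx' : hh α σ2 s (x + γ) - γ = t (Sum.inr j) := hx
    have hy' : hh α σ2 s (y + γ) - γ = t (Sum.inr j) := hy
    have := (hh_strictMono hα hσ hs).injective
      (show hh α σ2 s (x + γ) = hh α σ2 s (y + γ) by linarith)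
    linarith

lemma phi_lt {k₁ : ℕ} {α σ2 s : ℝ} (hα : 0 < α) (hσ : 0 < σ2) (hs : 0 < s)
    (A : Matrix (Fin k₁ ⊕ Fin 1) (Fin k₁ ⊕ Fin 1) ℝ) (hA : IsUnit A.det)
    (t : (Fin k₁ ⊕ Fin 1) → ℝ) :
    gaussPi _ σ2 {z | ∀ i, Psi k₁ α σ2 (-t (Sum.inr 0)) (A *ᵥ z, (s, e2 k₁)) i ≤ t i} <
    gaussPi _ σ2 {z | ∀ i, Psi k₁ α σ2 (-t (Sum.inr 0) + 1) (A *ᵥ z, (s, e2 k₁)) i ≤ t i} := by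
  have hmono := hh_strictMono hα hσ hs
  have := gaussPi_prob (Fin k₁ ⊕ Fin 1) hσ
  set D : Set ((Fin k₁ ⊕ Fin 1) → ℝ) := {z | (∀ a, (A *ᵥ z) (Sum.inl a) < t (Sum.inl a)) ∧
    t (Sum.inr 0) < (A *ᵥ z) (Sum.inr 0) ∧
    hh α σ2 s ((A *ᵥ z) (Sum.inr 0) + (-t (Sum.inr 0) + 1)) < 1} with hD
  have hci : ∀ i, Continuous fun z : (Fin k₁ ⊕ Fin 1) → ℝ => (A *ᵥ z) i := by
    intro i; fun_prop
  have hDo : IsOpen D := by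
    refine IsOpen.and ?_ (IsOpen.and ?_ ?_)
    · simp only [Set.ofPred_forall]
      exact isOpen_iInter_of_finite fun a => isOpen_lt (hci _) continuous_const
    · exact isOpen_lt continuous_const (hci _)
    · exact isOpen_lt ((hh_continuous α σ2 s).comp ((hci _).add continuous_const))
        continuous_const
  have hDne : D.Nonempty := by
    have hcont : ContinuousAt (fun y => hh α σ2 s (y + (-t (Sum.inr 0) + 1))) (t (Sum.inr 0)) :=
      ((hh_continuous α σ2 s).comp (by fun_prop : Continuous fun y : ℝ =>
        y + (-t (Sum.inr 0) + 1))).continuousAt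
    have hval : hh α σ2 s (t (Sum.inr 0) + (-t (Sum.inr 0) + 1)) < 1 := by
      rw [add_neg_cancel_left]; exact hh_one_lt α σ2 s
    have hev := hcont.eventually_lt_const hval
    obtain ⟨y, hy1, hy2⟩ := ((hev.filter_mono nhdsWithin_le_nhds).and
      (self_mem_nhdsWithin : Set.Ioi (t (Sum.inr 0)) ∈ 𝓝[>] (t (Sum.inr 0)))).exists
    refine ⟨A⁻¹ *ᵥ (Sum.elim (fun a => t (Sum.inl a) - 1) (fun _ => y)), ?_⟩
    rw [hD]
    simp only [Set.mem_ofPred_eq, mulVec_mulVec, mul_nonsing_inv _ hA, one_mulVec, Sum.elim_inl,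
      Sum.elim_inr]
    exact ⟨fun a => by linarith, hy2, hy1⟩
  have hDpos : gaussPi _ σ2 D ≠ 0 := fun h0 =>
    hDo.measure_ne_zero volume hDne (gaussPi_ac' hσ h0)
  set S0 := {z | ∀ i, Psi k₁ α σ2 (-t (Sum.inr 0)) (A *ᵥ z, (s, e2 k₁)) i ≤ t i} with hS0
  set S1 := {z | ∀ i, Psi k₁ α σ2 (-t (Sum.inr 0) + 1) (A *ᵥ z, (s, e2 k₁)) i ≤ t i} with hS1
  have hS0' : ∀ z ∈ S0, (∀ a, (A *ᵥ z) (Sum.inl a) ≤ t (Sum.inl a)) ∧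
      (A *ᵥ z) (Sum.inr 0) ≤ t (Sum.inr 0) := by
    intro z hz
    refine ⟨fun a => ?_, ?_⟩
    · have := hz (Sum.inl a)
      rwa [Psi_inl] at this
    · have := hz (Sum.inr 0)
      rw [Psi_inr] at this
      by_contra hlt
      have h3 := hmono (show 0 < (A *ᵥ z) (Sum.inr 0) + -t (Sum.inr 0) by linarith)
      rw [hh_zero] at h3
      linarith
  have hS1' : ∀ z, (∀ a, (A *ᵥ z) (Sum.inl a) ≤ t (Sum.inl a)) →
      hh α σ2 s ((A *ᵥ z) (Sum.inr 0) + (-t (Sum.inr 0) + 1)) ≤ 1 → z ∈ S1 := by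
    intro z h1 h2 i
    rcases i with a | j
    · rw [Psi_inl]; exact h1 a
    · have : j = 0 := Subsingleton.elim _ _
      subst this
      rw [Psi_inr]; linarith
  have hsub : S0 ∪ D ⊆ S1 := by
    rintro z (hz | hz)
    · obtain ⟨h1, h2⟩ := hS0' z hz
      refine hS1' z h1 ?_
      have := hmono.monotone (show (A *ᵥ z) (Sum.inr 0) + (-t (Sum.inr 0) + 1) ≤ 1 by linarith)
      linarith [hh_one_lt α σ2 s]
    · exact hS1' z (fun a => (hz.1 a).le) hz.2.2.le
  have hdisj : Disjoint S0 D := by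
    rw [Set.disjoint_left]
    intro z hz hzD
    exact absurd (hS0' z hz).2 (not_le.2 hzD.2.1)
  calc gaussPi _ σ2 S0 < gaussPi _ σ2 S0 + gaussPi _ σ2 D :=
        ENNReal.lt_add_right (measure_ne_top _ _) hDpos
    _ = gaussPi _ σ2 (S0 ∪ D) := (measure_union hdisj hDo.measurableSet).symm
    _ ≤ gaussPi _ σ2 S1 := measure_mono hsub


/-! ### Two-point argument -/

lemma two_point {Ω : Type*} [MeasurableSpace Ω] (P1 P2 : Measure Ω) [IsProbabilityMeasure P1]
    [IsProbabilityMeasure P2] (G : Ω → ℝ) (hG : Measurable G) (F1 F2 δ ε : ℝ)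
    (h : 2 * δ < |F1 - F2|)
    (hTV : ∀ E, MeasurableSet E → (P1 E).toReal ≤ (P2 E).toReal + ε) :
    ENNReal.ofReal ((1 - ε) / 2) ≤ P1 {y | δ < |G y - F1|} ∨
      ENNReal.ofReal ((1 - ε) / 2) ≤ P2 {y | δ < |G y - F2|} := by
  have hm1 : MeasurableSet {y | δ < |G y - F1|} :=
    measurableSet_lt measurable_const (by fun_prop)
  have hm2 : MeasurableSet {y | δ < |G y - F2|} :=
    measurableSet_lt measurable_const (by fun_prop)
  have hcov : {y | δ < |G y - F1|} ∪ {y | δ < |G y - F2|} = Set.univ := by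
    ext y
    simp only [Set.mem_union, Set.mem_ofPred_eq, Set.mem_univ, iff_true]
    by_contra hcon
    push Not at hcon
    have := abs_sub_le F1 (G y) F2
    rw [abs_sub_comm F1 (G y)] at this
    linarith
  have h1 : (1 : ℝ) ≤ (P1 {y | δ < |G y - F1|}).toReal + (P1 {y | δ < |G y - F2|}).toReal := by
    have := measure_union_le (μ := P1) {y | δ < |G y - F1|} {y | δ < |G y - F2|}
    rw [hcov, measure_univ] at this
    rw [← ENNReal.toReal_add (measure_ne_top _ _) (measure_ne_top _ _)]
    have h2 := ENNReal.toReal_mono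
      (ENNReal.add_ne_top.2 ⟨measure_ne_top _ _, measure_ne_top _ _⟩) this
    simpa using h2
  have h2 := hTV _ hm2
  rcases le_or_gt ((1 - ε) / 2) (P1 {y | δ < |G y - F1|}).toReal with h3 | h3
  · left
    exact ENNReal.ofReal_le_of_le_toReal h3
  · right
    exact ENNReal.ofReal_le_of_le_toReal (by linarith)

lemma exists_step (φ : ℝ → ℝ) (a : ℝ) (m : ℕ) (hm : 0 < m) (h : φ a ≠ φ (a + 1)) :
    ∃ j : ℕ, j < m ∧ φ (a + j / m) ≠ φ (a + ((j + 1 : ℕ) : ℝ) / m) := by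
  by_contra hcon
  push Not at hcon
  have hall : ∀ j : ℕ, j ≤ m → φ (a + j / m) = φ a := by
    intro j
    induction j with
    | zero => intro _; simp
    | succ j ih => intro hj; rw [← hcon j (by omega), ih (by omega)]
  have := hall m le_rfl
  rw [div_self (by positivity)] at this
  exact h this.symm

lemma exists_root {κ : Type*} [Fintype κ] [DecidableEq κ] (Q : Matrix κ κ ℝ) (hQ : Q.PosDef) :
    ∃ A : Matrix κ κ ℝ, IsUnit A.det ∧ A * Aᵀ = Q⁻¹ := by
  open scoped MatrixOrder in
  obtain ⟨B, hB⟩ := CStarAlgebra.nonneg_iff_eq_star_mul_self.mp hQ.posSemidef.nonneg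
  have hB' : Q = Bᵀ * B := by rw [hB, star_eq_conjTranspose, conjTranspose_eq_transpose_of_trivial]
  have hdet : IsUnit B.det := by
    have := hQ.det_pos
    rw [hB', det_mul, det_transpose] at this
    refine IsUnit.mk0 _ fun h0 => ?_
    rw [h0] at this
    simp at this
  refine ⟨B⁻¹, ?_, ?_⟩
  · rw [det_nonsing_inv]
    exact hdet.ringInverse
  · rw [hB', Matrix.mul_inv_rev, transpose_nonsing_inv]

lemma inv_tendsto {κ : Type*} [Fintype κ] [DecidableEq κ] {q : ℕ → Matrix κ κ ℝ}
    {Q : Matrix κ κ ℝ} (h : Tendsto q atTop (𝓝 Q)) (hQ : Q.det ≠ 0) :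
    Tendsto (fun n => (q n)⁻¹) atTop (𝓝 Q⁻¹) := by
  have hc : ContinuousAt Inv.inv Q := by
    apply continuousAt_matrix_inv
    exact NormedRing.inverse_continuousAt (Units.mk0 _ hQ)
  exact hc.tendsto.comp h

lemma cvec_tendsto {k₁ : ℕ} {q : ℕ → Matrix (Fin k₁ ⊕ Fin 1) (Fin k₁ ⊕ Fin 1) ℝ}
    {Q : Matrix (Fin k₁ ⊕ Fin 1) (Fin k₁ ⊕ Fin 1) ℝ} (h : Tendsto q atTop (𝓝 Q))
    (hQ : Q.toBlocks₁₁.det ≠ 0) :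
    Tendsto (fun n => cvec (q n)) atTop (𝓝 (cvec Q)) := by
  have h11 : Tendsto (fun n => (q n).toBlocks₁₁) atTop (𝓝 Q.toBlocks₁₁) := by
    have : Continuous fun B : Matrix (Fin k₁ ⊕ Fin 1) (Fin k₁ ⊕ Fin 1) ℝ => B.toBlocks₁₁ := by
      unfold toBlocks₁₁
      fun_prop
    exact (this.tendsto _).comp h
  have hi := inv_tendsto h11 hQ
  have h12 : Tendsto (fun n => (fun i => q n (Sum.inl i) (Sum.inr 0) : Fin k₁ → ℝ)) atTop
      (𝓝 (fun i => Q (Sum.inl i) (Sum.inr 0))) := by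
    have : Continuous fun B : Matrix (Fin k₁ ⊕ Fin 1) (Fin k₁ ⊕ Fin 1) ℝ =>
        (fun i => B (Sum.inl i) (Sum.inr 0) : Fin k₁ → ℝ) := by
      fun_prop
    exact (this.tendsto _).comp h
  have hmv : Continuous fun p : Matrix (Fin k₁) (Fin k₁) ℝ × (Fin k₁ → ℝ) => -(p.1 *ᵥ p.2) := by
    fun_prop
  have hB := (hmv.tendsto _).comp (hi.prodMk_nhds h12)
  rw [tendsto_pi_nhds] at hB ⊢
  intro i
  rcases i with a | j
  · exact hB a
  · exact tendsto_const_nhds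

lemma Pmeas_prob {n k₁ k₂ : ℕ} (X : Matrix (Fin n) (Fin k₁ ⊕ Fin k₂) ℝ)
    (β : (Fin k₁ ⊕ Fin k₂) → ℝ) {σ2 : ℝ} (h : 0 < σ2) :
    IsProbabilityMeasure (Pmeas X β σ2) := by
  have := gaussPi_prob (Fin n) h
  exact Measure.isProbabilityMeasure_map (by fun_prop)

lemma Pmeas_apply {n k₁ k₂ : ℕ} (X : Matrix (Fin n) (Fin k₁ ⊕ Fin k₂) ℝ)
    (β : (Fin k₁ ⊕ Fin k₂) → ℝ) (σ2 : ℝ) (E : Set (Fin n → ℝ)) :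
    Pmeas X β σ2 E = gaussPi (Fin n) σ2 {u | X *ᵥ β + u ∈ E} :=
  (measurableEmbedding_addLeft (X *ᵥ β)).map_apply _ _

/-- The local parameter sequence. -/
def vth {k₁ : ℕ} (β : (Fin k₁ ⊕ Fin 1) → ℝ) (n : ℕ) (γ : ℝ) : (Fin k₁ ⊕ Fin 1) → ℝ :=
  β + (γ / Real.sqrt n) • e2 k₁

lemma enorm2_vth {k₁ : ℕ} (β : (Fin k₁ ⊕ Fin 1) → ℝ) (n : ℕ) (γ : ℝ) :
    enorm2 (vth β n γ - β) = |γ| / Real.sqrt n := by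
  rw [vth, add_sub_cancel_left, enorm2]
  simp only [Pi.smul_apply, smul_eq_mul, Fintype.sum_sum_type, e2, Sum.elim_inl, Sum.elim_inr]
  simp only [Pi.zero_apply, mul_zero, ne_eq, OfNat.ofNat_ne_zero, not_false_eq_true, zero_pow,
    Finset.sum_const_zero, mul_one, zero_add, Finset.univ_unique, Finset.sum_const,
    Finset.card_singleton, one_smul]
  rw [Real.sqrt_sq_eq_abs, abs_div, abs_of_nonneg (Real.sqrt_nonneg _)]

lemma vth_dist {k₁ n : ℕ} (hn : 0 < n) (X : Matrix (Fin n) (Fin k₁ ⊕ Fin 1) ℝ)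
    (β : (Fin k₁ ⊕ Fin 1) → ℝ) (γ γ' : ℝ) :
    ∑ i, ((X *ᵥ vth β n γ) i - (X *ᵥ vth β n γ') i) ^ 2 =
      (γ - γ') ^ 2 * ((n : ℝ)⁻¹ • (Xᵀ * X)) (Sum.inr 0) (Sum.inr 0) := by
  have hn' : (0 : ℝ) < n := by exact_mod_cast hn
  have h1 : ∀ i, (X *ᵥ e2 k₁) i = X i (Sum.inr 0) := by
    intro i
    simp [mulVec, dotProduct, e2]
  have h2 : ∀ i, ((X *ᵥ vth β n γ) i - (X *ᵥ vth β n γ') i) ^ 2 =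
      (γ - γ') ^ 2 * ((n : ℝ)⁻¹ * (X i (Sum.inr 0) * X i (Sum.inr 0))) := by
    intro i
    simp only [vth, mulVec_add, mulVec_smul, Pi.add_apply, Pi.smul_apply, smul_eq_mul, h1]
    have : (n : ℝ)⁻¹ = (1 / Real.sqrt n) ^ 2 := by
      rw [div_pow, Real.sq_sqrt hn'.le]; simp
    rw [this]
    ring
  simp_rw [h2, Matrix.smul_apply, Matrix.mul_apply, transpose_apply, smul_eq_mul, Finset.mul_sum]


/-! ### Convergence of the finite-sample cdf along local parameters -/

lemma cvec_eq_e2 {k₁ : ℕ} {Q : Matrix (Fin k₁ ⊕ Fin 1) (Fin k₁ ⊕ Fin 1) ℝ}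
    (hQ12 : Q.toBlocks₁₂ = 0) : cvec Q = e2 k₁ := by
  have h : (fun i => Q (Sum.inl i) (Sum.inr 0) : Fin k₁ → ℝ) = 0 := by
    funext i
    exact congrFun (congrFun hQ12 i) 0
  rw [cvec, h, mulVec_zero, neg_zero]
  rfl

lemma e2_quad {k₁ : ℕ} (Q : Matrix (Fin k₁ ⊕ Fin 1) (Fin k₁ ⊕ Fin 1) ℝ) :
    e2 k₁ ⬝ᵥ (Q *ᵥ e2 k₁) = Q (Sum.inr 0) (Sum.inr 0) := by
  simp [mulVec, dotProduct, e2]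

lemma F_tendsto {k₁ : ℕ} (X : ∀ n : ℕ, Matrix (Fin n) (Fin k₁ ⊕ Fin 1) ℝ)
    (Q : Matrix (Fin k₁ ⊕ Fin 1) (Fin k₁ ⊕ Fin 1) ℝ) (hQ : Q.PosDef)
    (hQ12 : Q.toBlocks₁₂ = 0)
    (hlim : Tendsto (fun n : ℕ => (n : ℝ)⁻¹ • ((X n)ᵀ * X n)) atTop (𝓝 Q))
    (σ2 α : ℝ) (hσ : 0 < σ2) (hα : 0 < α)
    (A : Matrix (Fin k₁ ⊕ Fin 1) (Fin k₁ ⊕ Fin 1) ℝ) (hA : IsUnit A.det) (hAQ : A * Aᵀ = Q⁻¹)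
    (β : (Fin k₁ ⊕ Fin 1) → ℝ) (hβ : β ∘ Sum.inr = 0) (t : (Fin k₁ ⊕ Fin 1) → ℝ) (γ : ℝ) :
    Tendsto (fun n : ℕ => (Pmeas (X n) (vth β n γ) σ2
      {Y' | ∀ i, Real.sqrt n * (mavg α σ2 (X n) Y' i - vth β n γ i) ≤ t i}).toReal) atTop
      (𝓝 (gaussPi _ σ2 {z | ∀ i, Psi k₁ α σ2 γ
        (A *ᵥ z, (Q (Sum.inr 0) (Sum.inr 0), e2 k₁)) i ≤ t i}).toReal) := by
  have hs : 0 < Q (Sum.inr 0) (Sum.inr 0) := hQ.diag_pos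
  have hd : Q.det ≠ 0 := hQ.det_pos.ne'
  have h11 : Q.toBlocks₁₁.det ≠ 0 := (hQ.submatrix Sum.inl_injective).det_pos.ne'
  have hcv := cvec_tendsto hlim h11
  rw [cvec_eq_e2 hQ12] at hcv
  have hsv : Tendsto (fun n : ℕ => cvec ((n : ℝ)⁻¹ • ((X n)ᵀ * X n)) ⬝ᵥ
      (((n : ℝ)⁻¹ • ((X n)ᵀ * X n)) *ᵥ cvec ((n : ℝ)⁻¹ • ((X n)ᵀ * X n)))) atTop
      (𝓝 (Q (Sum.inr 0) (Sum.inr 0))) := by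
    rw [← e2_quad Q]
    have hc : Continuous fun p : Matrix (Fin k₁ ⊕ Fin 1) (Fin k₁ ⊕ Fin 1) ℝ ×
        ((Fin k₁ ⊕ Fin 1) → ℝ) => p.2 ⬝ᵥ (p.1 *ᵥ p.2) := by
      fun_prop
    exact (hc.tendsto (Q, e2 k₁)).comp (hlim.prodMk_nhds hcv)
  have hev1 : ∀ᶠ n : ℕ in atTop, ((n : ℝ)⁻¹ • ((X n)ᵀ * X n)).det ≠ 0 := by
    have hc : Continuous fun B : Matrix (Fin k₁ ⊕ Fin 1) (Fin k₁ ⊕ Fin 1) ℝ => B.det := by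
      fun_prop
    exact ((hc.tendsto Q).comp hlim).eventually_ne hd
  have hev2 : ∀ᶠ n : ℕ in atTop, ((n : ℝ)⁻¹ • ((X n)ᵀ * X n)).toBlocks₁₁.det ≠ 0 := by
    have hc : Continuous fun B : Matrix (Fin k₁ ⊕ Fin 1) (Fin k₁ ⊕ Fin 1) ℝ =>
        B.toBlocks₁₁.det := by
      unfold toBlocks₁₁
      fun_prop
    exact ((hc.tendsto Q).comp hlim).eventually_ne h11
  have hunit : ∀ᶠ n : ℕ in atTop, 0 < n ∧ IsUnit ((X n)ᵀ * X n).det ∧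
      IsUnit ((X1 (X n))ᵀ * X1 (X n)).det := by
    filter_upwards [hev1, hev2, eventually_gt_atTop 0] with n h1 h2 hn
    refine ⟨hn, IsUnit.mk0 _ ?_, IsUnit.mk0 _ ?_⟩
    · intro h0
      rw [det_smul, h0, mul_zero] at h1
      exact h1 rfl
    · intro h0
      have e : ((n : ℝ)⁻¹ • ((X n)ᵀ * X n)).toBlocks₁₁ =
          (n : ℝ)⁻¹ • ((X1 (X n))ᵀ * X1 (X n)) := by
        ext a b
        simp [X1, mul_apply, toBlocks₁₁]
      rw [e, det_smul, h0, mul_zero] at h2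
      exact h2 rfl
  have hM : Tendsto (fun n : ℕ => (Real.sqrt n • (((X n)ᵀ * X n)⁻¹ * (X n)ᵀ)) *
      (Real.sqrt n • (((X n)ᵀ * X n)⁻¹ * (X n)ᵀ))ᵀ) atTop (𝓝 (A * Aᵀ)) := by
    rw [hAQ]
    refine (inv_tendsto hlim hd).congr' ?_
    filter_upwards [hunit] with n hn
    obtain ⟨hn0, hu, -⟩ := hn
    have hn' : (0 : ℝ) < n := by exact_mod_cast hn0
    have hsym : (((X n)ᵀ * X n)⁻¹)ᵀ = ((X n)ᵀ * X n)⁻¹ := by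
      rw [transpose_nonsing_inv, transpose_mul, transpose_transpose]
    rw [transpose_smul, transpose_mul, transpose_transpose, hsym, Matrix.smul_mul,
      Matrix.mul_smul, smul_smul, Real.mul_self_sqrt hn'.le, Matrix.mul_assoc,
      ← Matrix.mul_assoc (X n)ᵀ, mul_nonsing_inv _ hu, Matrix.mul_one]
    apply inv_eq_right_inv
    rw [Matrix.smul_mul, Matrix.mul_smul, smul_smul, mul_nonsing_inv _ hu,
      inv_mul_cancel₀ hn'.ne', one_smul]
  have hmain := gauss_conv σ2 hσ (fun n : ℕ => Real.sqrt n • (((X n)ᵀ * X n)⁻¹ * (X n)ᵀ)) A hM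
    _ _ (hsv.prodMk_nhds hcv) (Psi k₁ α σ2 γ) (Psi_continuous k₁ α σ2 γ) t
    (phi_null hα hσ hs γ A hA t)
  have := gaussPi_prob (Fin k₁ ⊕ Fin 1) hσ
  refine (ENNReal.tendsto_toReal (measure_ne_top _ _)).comp (hmain.congr' ?_)
  filter_upwards [hunit] with n hn
  obtain ⟨hn0, hu, hu1⟩ := hn
  have hn' : (0 : ℝ) < n := by exact_mod_cast hn0
  rw [Pmeas_apply]
  congr 1
  ext u
  simp only [Set.mem_ofPred_eq]
  have hγ : Real.sqrt n * vth β n γ (Sum.inr 0) = γ := by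
    have hb : β (Sum.inr 0) = 0 := congrFun hβ 0
    have hsq : Real.sqrt n ≠ 0 := (Real.sqrt_pos.2 hn').ne'
    simp only [vth, Pi.add_apply, Pi.smul_apply, hb, e2, Sum.elim_inr, smul_eq_mul]
    field_simp
    simp
  refine forall_congr' fun i => ?_
  rw [mavg_eq hn0 (X n) α σ2 γ hσ hu hu1 (vth β n γ) hγ u i]

lemma main_eps {k₁ : ℕ} (X : ∀ n : ℕ, Matrix (Fin n) (Fin k₁ ⊕ Fin 1) ℝ)
    (Q : Matrix (Fin k₁ ⊕ Fin 1) (Fin k₁ ⊕ Fin 1) ℝ) (hQ : Q.PosDef)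
    (hQ12 : Q.toBlocks₁₂ = 0)
    (hlim : Tendsto (fun n : ℕ => (n : ℝ)⁻¹ • ((X n)ᵀ * X n)) atTop (𝓝 Q))
    (σ2 α : ℝ) (hσ : 0 < σ2) (hα : 0 < α)
    (β : (Fin k₁ ⊕ Fin 1) → ℝ) (hβ : β ∘ Sum.inr = 0) (t : (Fin k₁ ⊕ Fin 1) → ℝ)
    (ε : ℝ) (hε : 0 < ε) :
    ∃ δ : ℝ, 0 < δ ∧ ∀ᶠ n : ℕ in atTop, ∀ G : (Fin n → ℝ) → ℝ, Measurable G →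
      ENNReal.ofReal ((1 - ε) / 2) ≤ ⨆ ϑ : (Fin k₁ ⊕ Fin 1) → ℝ,
        ⨆ (_ : enorm2 (ϑ - β) < (|t (Sum.inr 0)| + 2) / Real.sqrt n),
          Pmeas (X n) ϑ σ2 {Y | δ < |G Y - (Pmeas (X n) ϑ σ2
            {Y' | ∀ i, Real.sqrt n * (mavg α σ2 (X n) Y' i - ϑ i) ≤ t i}).toReal|} := by
  obtain ⟨A, hA, hAQ⟩ := exists_root Q hQ
  have hs : 0 < Q (Sum.inr 0) (Sum.inr 0) := hQ.diag_pos
  set s := Q (Sum.inr 0) (Sum.inr 0) with hsdef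
  have hF := F_tendsto X Q hQ hQ12 hlim σ2 α hσ hα A hA hAQ β hβ t
  set φ : ℝ → ℝ := fun γ => (gaussPi _ σ2 {z | ∀ i, Psi k₁ α σ2 γ
    (A *ᵥ z, (s, e2 k₁)) i ≤ t i}).toReal with hφ
  have hne : φ (-t (Sum.inr 0)) ≠ φ (-t (Sum.inr 0) + 1) := by
    have := gaussPi_prob (Fin k₁ ⊕ Fin 1) hσ
    exact ((ENNReal.toReal_lt_toReal (measure_ne_top _ _) (measure_ne_top _ _)).2
      (phi_lt hα hσ hs A hA t)).ne
  obtain ⟨m, hm0, hm⟩ : ∃ m : ℕ, 0 < m ∧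
      Real.exp ((1 / (m : ℝ)) ^ 2 * (s + 1) / σ2) - 1 ≤ ε ^ 2 := by
    have h1 : Tendsto (fun m : ℕ => Real.exp ((1 / (m : ℝ)) ^ 2 * (s + 1) / σ2) - 1) atTop
        (𝓝 0) := by
      have hc : Continuous fun x : ℝ => Real.exp (x ^ 2 * (s + 1) / σ2) - 1 := by fun_prop
      have := (hc.tendsto 0).comp (tendsto_one_div_atTop_nhds_zero_nat (𝕜 := ℝ))
      simpa [Function.comp_def] using this
    have h2 := h1.eventually_le_const (show (0 : ℝ) < ε ^ 2 by positivity)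
    obtain ⟨m, h3, h4⟩ := (h2.and (eventually_gt_atTop 0)).exists
    exact ⟨m, h4, h3⟩
  obtain ⟨j, hj, hstep⟩ := exists_step φ _ m hm0 hne
  have hm' : (0 : ℝ) < m := by exact_mod_cast hm0
  set γ : ℝ := -t (Sum.inr 0) + j / m with hγ
  set γ' : ℝ := -t (Sum.inr 0) + ((j + 1 : ℕ) : ℝ) / m with hγ'
  have hbd : ∀ i : ℕ, i ≤ m → |-t (Sum.inr 0) + (i : ℝ) / m| < |t (Sum.inr 0)| + 2 := by
    intro i hi
    have h0 : (0 : ℝ) ≤ (i : ℝ) / m := by positivity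
    have h1 : (i : ℝ) / m ≤ 1 := by
      rw [div_le_one hm']
      exact_mod_cast hi
    have h2 := abs_add_le (-t (Sum.inr 0)) ((i : ℝ) / m)
    rw [abs_neg, abs_of_nonneg h0] at h2
    linarith
  have hb1 : |γ| < |t (Sum.inr 0)| + 2 := hbd j hj.le
  have hb2 : |γ'| < |t (Sum.inr 0)| + 2 := hbd (j + 1) hj
  have hdiff : (γ - γ') ^ 2 = (1 / (m : ℝ)) ^ 2 := by
    rw [hγ, hγ']
    push_cast
    ring
  have hpos : 0 < |φ γ - φ γ'| := abs_pos.2 (sub_ne_zero.2 hstep)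
  refine ⟨|φ γ - φ γ'| / 4, by positivity, ?_⟩
  have hev := ((hF γ).sub (hF γ')).abs.eventually_const_lt
    (show 2 * (|φ γ - φ γ'| / 4) < |φ γ - φ γ'| by linarith)
  have hq : ∀ᶠ n : ℕ in atTop,
      ((n : ℝ)⁻¹ • ((X n)ᵀ * X n)) (Sum.inr 0) (Sum.inr 0) ≤ s + 1 := by
    have hc : Continuous fun B : Matrix (Fin k₁ ⊕ Fin 1) (Fin k₁ ⊕ Fin 1) ℝ =>
        B (Sum.inr 0) (Sum.inr 0) := by fun_prop
    exact ((hc.tendsto Q).comp hlim).eventually_le_const (by linarith)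
  filter_upwards [hev, hq, eventually_gt_atTop 0] with n hn1 hn2 hn0 G hG
  have hn' : (0 : ℝ) < n := by exact_mod_cast hn0
  have hsq : 0 < Real.sqrt n := Real.sqrt_pos.2 hn'
  have := Pmeas_prob (X n) (vth β n γ) hσ
  have := Pmeas_prob (X n) (vth β n γ') hσ
  have hTV : ∀ E, MeasurableSet E → (Pmeas (X n) (vth β n γ) σ2 E).toReal ≤
      (Pmeas (X n) (vth β n γ') σ2 E).toReal + ε := by
    intro E hE
    have h1 := gauss_tv hσ hE (X n *ᵥ vth β n γ) (X n *ᵥ vth β n γ') hε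
    rw [vth_dist hn0, hdiff] at h1
    have h2 : Real.exp ((1 / (m : ℝ)) ^ 2 *
        ((n : ℝ)⁻¹ • ((X n)ᵀ * X n)) (Sum.inr 0) (Sum.inr 0) / σ2) - 1 ≤ ε ^ 2 := by
      refine le_trans ?_ hm
      gcongr
    have h3 : (Real.exp ((1 / (m : ℝ)) ^ 2 *
        ((n : ℝ)⁻¹ • ((X n)ᵀ * X n)) (Sum.inr 0) (Sum.inr 0) / σ2) - 1) / (2 * ε) ≤ ε / 2 := by
      rw [div_le_iff₀ (by positivity)]
      linarith [show ε / 2 * (2 * ε) = ε ^ 2 by ring]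
    refine h1.trans ?_
    rw [Pmeas]
    linarith
  rcases two_point _ _ G hG _ _ _ ε hn1 hTV with h | h
  · refine le_iSup₂_of_le (vth β n γ) ?_ h
    rw [enorm2_vth]
    gcongr
  · refine le_iSup₂_of_le (vth β n γ') ?_ h
    rw [enorm2_vth]
    gcongr

/-- minimax impossibility result (19): no estimator of `F_{n,ϑ,σ}(t)` can be
uniformly consistent over shrinking balls around a point `β` of the restricted model. -/
theorem statement13 {k₁ k₂ : ℕ} (hk₁ : 0 < k₁) (hk₂ : k₂ = 1)
    (X : ∀ n : ℕ, Matrix (Fin n) (Fin k₁ ⊕ Fin k₂) ℝ)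
    (hX : ∀ n, k₁ + k₂ ≤ n → (X n).rank = k₁ + k₂)
    (Q : Matrix (Fin k₁ ⊕ Fin k₂) (Fin k₁ ⊕ Fin k₂) ℝ) (hQ : Q.PosDef)
    (hQ12 : Q.toBlocks₁₂ = 0)
    (hlim : Tendsto (fun n : ℕ => (n : ℝ)⁻¹ • ((X n)ᵀ * X n)) atTop (𝓝 Q))
    (σ α : ℝ) (hσ : 0 < σ) (hα : 0 < α) :
    ∀ t : (Fin k₁ ⊕ Fin k₂) → ℝ, ∃ ρ₀ : ℝ, 0 < ρ₀ ∧
      ∀ β : (Fin k₁ ⊕ Fin k₂) → ℝ, β ∘ Sum.inr = 0 →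
        (1 / 2 : ℝ≥0∞) ≤ ⨆ δ : ℝ, ⨆ (_ : 0 < δ),
          Filter.liminf (fun n : ℕ =>
              ⨅ G : (Fin n → ℝ) → ℝ, ⨅ (_ : Measurable G),
                ⨆ ϑ : (Fin k₁ ⊕ Fin k₂) → ℝ,
                  ⨆ (_ : enorm2 (ϑ - β) < ρ₀ / Real.sqrt n),
                  Pmeas (X n) ϑ (σ ^ 2)
                    {Y | δ < |G Y -
                      (Pmeas (X n) ϑ (σ ^ 2)
                        {Y' | ∀ i, Real.sqrt n * (mavg α (σ ^ 2) (X n) Y' i - ϑ i) ≤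
                          t i}).toReal|})
            atTop := by
  subst hk₂
  have hσ2 : 0 < σ ^ 2 := by positivity
  intro t
  refine ⟨|t (Sum.inr 0)| + 2, by positivity, fun β hβ => ?_⟩
  have hlim2 : Tendsto (fun ε : ℝ => ENNReal.ofReal ((1 - ε) / 2)) (𝓝[>] 0)
      (𝓝 (1 / 2 : ℝ≥0∞)) := by
    have hc : Continuous fun ε : ℝ => ENNReal.ofReal ((1 - ε) / 2) :=
      ENNReal.continuous_ofReal.comp (by fun_prop)
    have h := (hc.tendsto 0).mono_left (nhdsWithin_le_nhds (s := Set.Ioi 0))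
    have e : ENNReal.ofReal ((1 - (0 : ℝ)) / 2) = 1 / 2 := by
      rw [sub_zero, ENNReal.ofReal_div_of_pos (by norm_num)]
      simp
    rwa [e] at h
  refine le_of_tendsto hlim2 ?_
  filter_upwards [self_mem_nhdsWithin] with ε hε
  obtain ⟨δ, hδ, hev⟩ := main_eps X Q hQ hQ12 hlim (σ ^ 2) α hσ2 hα β hβ t ε hε
  refine le_iSup₂_of_le δ hδ ?_
  refine le_liminf_of_le (by isBoundedDefault) ?_
  filter_upwards [hev] with n hn
  exact le_iInf₂ fun G hG => hn G hG

end
end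

section
/- Let a, b > 0 and let g : [0,∞) → [0,∞) be the inverse of the strictly increasing continuous bijection h(ξ) = ξ/(1 + a exp(−ξ²/b)) of [0,∞) onto itself. Then lim_{ζ→∞} g(ζ)/ζ = 1 and lim_{ζ→∞} (g(ζ)/ζ − 1)·ζ = 0, i.e., g(ζ) − ζ → 0 as ζ → ∞. -/
open MeasureTheory Matrix Real Filter Topology ENNReal NNReal

noncomputable section

variable {n k₁ k₂ : ℕ}

/-- `g` is a right inverse of `h` on positive reals. -/
lemma hfun_gfun_aux (a b : ℝ) (ha : 0 < a) (hb : 0 < b) (z : ℝ) (hz : 0 < z) :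
    hfun a b (gfun a b z) = z := by
  apply Function.invFun_eq
  have hcont : Continuous (hfun a b) := by
    unfold hfun
    refine Continuous.div continuous_id (by fun_prop) ?_
    intro x
    positivity
  have h0 : hfun a b 0 ≤ z := by simp [hfun, hz.le]
  have h1 : z ≤ hfun a b ((1 + a) * z) := by
    unfold hfun
    rw [le_div_iff₀ (by positivity)]
    have he : Real.exp (-((1 + a) * z) ^ 2 / b) ≤ 1 := by
      rw [Real.exp_le_one_iff]
      rw [neg_div]
      have : 0 ≤ ((1 + a) * z) ^ 2 / b := by positivity
      linarith
    nlinarith [mul_le_mul_of_nonneg_left he (mul_pos ha hz).le]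
  obtain ⟨x, -, hx⟩ := intermediate_value_Icc
    (by positivity : (0 : ℝ) ≤ (1 + a) * z) hcont.continuousOn ⟨h0, h1⟩
  exact ⟨x, hx⟩

/-- Two-sided bound on `g(ζ) - ζ`. -/
lemma gfun_bounds_aux (a b : ℝ) (ha : 0 < a) (hb : 0 < b) (z : ℝ) (hz : 0 < z) :
    0 ≤ gfun a b z - z ∧ gfun a b z - z ≤ a * b / z := by
  have h := hfun_gfun_aux a b ha hb z hz
  set g := gfun a b z with hg
  unfold hfun at h
  have hpos : 0 < Real.exp (-g ^ 2 / b) := Real.exp_pos _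
  rw [div_eq_iff (by positivity)] at h
  have hge : z ≤ g := by
    have : 0 ≤ z * (a * Real.exp (-g ^ 2 / b)) := by positivity
    linarith
  refine ⟨by linarith, ?_⟩
  have hgp : 0 < g := by linarith
  have hexp : Real.exp (-g ^ 2 / b) ≤ b / z ^ 2 := by
    rw [neg_div, Real.exp_neg]
    have h1 : z ^ 2 / b ≤ Real.exp (g ^ 2 / b) := by
      have h2 := Real.add_one_le_exp (g ^ 2 / b)
      have h3 : z ^ 2 / b ≤ g ^ 2 / b := by gcongr
      linarith
    calc (Real.exp (g ^ 2 / b))⁻¹ ≤ (z ^ 2 / b)⁻¹ := by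
          apply inv_anti₀ (by positivity) h1
      _ = b / z ^ 2 := inv_div _ _
  calc g - z = z * a * Real.exp (-g ^ 2 / b) := by linarith
    _ ≤ z * a * (b / z ^ 2) := by gcongr
    _ = a * b / z := by field_simp

/-- `g(ζ)/ζ → 1` and `(g(ζ)/ζ − 1)ζ → 0`, i.e. `g(ζ) − ζ → 0`, as `ζ → ∞`. -/
theorem statement18 (a b : ℝ) (ha : 0 < a) (hb : 0 < b) :
    Tendsto (fun ζ : ℝ => gfun a b ζ / ζ) atTop (𝓝 (1 : ℝ)) ∧
    Tendsto (fun ζ : ℝ => (gfun a b ζ / ζ - 1) * ζ) atTop (𝓝 (0 : ℝ)) ∧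
    Tendsto (fun ζ : ℝ => gfun a b ζ - ζ) atTop (𝓝 (0 : ℝ)) := by
  have h3 : Tendsto (fun ζ : ℝ => gfun a b ζ - ζ) atTop (𝓝 (0 : ℝ)) := by
    have hlim : Tendsto (fun ζ : ℝ => a * b / ζ) atTop (𝓝 (0 : ℝ)) :=
      tendsto_const_nhds.div_atTop tendsto_id
    refine tendsto_of_tendsto_of_tendsto_of_le_of_le' tendsto_const_nhds hlim ?_ ?_
    · filter_upwards [eventually_gt_atTop (0 : ℝ)] with z hz
      exact (gfun_bounds_aux a b ha hb z hz).1
    · filter_upwards [eventually_gt_atTop (0 : ℝ)] with z hz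
      exact (gfun_bounds_aux a b ha hb z hz).2
  refine ⟨?_, ?_, h3⟩
  · have h4 : Tendsto (fun ζ : ℝ => 1 + (gfun a b ζ - ζ) / ζ) atTop (𝓝 (1 + 0 : ℝ)) :=
      tendsto_const_nhds.add (h3.div_atTop tendsto_id)
    rw [add_zero] at h4
    refine h4.congr' ?_
    filter_upwards [eventually_gt_atTop (0 : ℝ)] with z hz
    field_simp
    ring
  · refine h3.congr' ?_
    filter_upwards [eventually_gt_atTop (0 : ℝ)] with z hz
    field_simp

end
end
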